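/- arXiv:1305.6492 — 3 statements merged into one kernel-verified Lean document; each statement's English description precedes it below -/
import Mathlib

section
/- Let M and N be abelian groups with additive involutions ⋆, and equip M ⊗_ℤ N with the involution determined by (m ⊗ n)⋆ = m⋆ ⊗ n⋆. The assignment ([m],[n]) ↦ [m ⊗ n] induces well-defined homomorphisms h^{ε}(M,⋆) ⊗ h^{ε'}(N,⋆) → h^{εε'}(M ⊗_ℤ N, ⋆) for all signs ε, ε' ∈ {+1,−1}. If M or N is free as an abelian group, then the resulting canonical maps (h⁺(M) ⊗ h⁺(N)) ⊕ (h⁻(M) ⊗ h⁻(N)) → h⁺(M ⊗_ℤ N) and (h⁺(M) ⊗ h⁻(N)) ⊕ (h⁻(M) ⊗ h⁺(N)) → h⁻(M ⊗_ℤ N) are isomorphisms. -/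
/-! Tate cohomology of an abelian group with involution. -/

def kerP {M : Type*} [AddCommGroup M] (f : M →+ M) : AddSubgroup M :=
  (AddMonoidHom.id M - f).ker

def imP {M : Type*} [AddCommGroup M] (f : M →+ M) : AddSubgroup M :=
  (AddMonoidHom.id M + f).range

/-- `hPlus f` is `h⁺(M, f)`; note `hPlus (-f)` is `h⁻(M, f)` since
`ker(id - (-f)) = ker(id + f)` and `im(id + (-f)) = im(id - f)`. -/
abbrev hPlus {M : Type*} [AddCommGroup M] (f : M →+ M) :=
  kerP f ⧸ (imP f).addSubgroupOf (kerP f)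

def hPlusMk {M : Type*} [AddCommGroup M] (f : M →+ M) (x : M) (hx : x ∈ kerP f) :
    hPlus f := QuotientAddGroup.mk ⟨x, hx⟩

/-- The involution on `M ⊗ N` determined by `(m ⊗ n)⋆ = m⋆ ⊗ n⋆`. -/
noncomputable def tensorInv {M N : Type*} [AddCommGroup M] [AddCommGroup N]
    (τM : M →+ M) (τN : N →+ N) :
    TensorProduct ℤ M N →+ TensorProduct ℤ M N :=
  (TensorProduct.map τM.toIntLinearMap τN.toIntLinearMap).toAddMonoidHom

/-!
Let `f`, `g` be the involutions of `M`, `N`, let `M` be flat, and put `M⁺ = ker (id - f)` and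
`C = im (id - f)`. In `0 → M⁺ ⊗ N → M ⊗ N → C ⊗ N → 0` the involution of `M` acts as `id` on `M⁺`
and as `-id` on `C`, so by flatness the outer terms have `h⁺` equal to `M⁺ ⊗ h⁺(N)` and
`C ⊗ h⁻(N)`. After lifting along `M → C`, the connecting maps become `id + f : M → M⁺` tensored
with `h^±(N)`. Hence the kernel of `M⁺ ⊗ h⁺(N) → h⁺(M ⊗ N)` is the image of `M ⊗ h⁺(N)`, which
leaves `h⁺(M) ⊗ h⁺(N)`. On the quotient side, `id + f : M → M⁺` taken modulo 2 has kernel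
`M⁻ + M⁺`, and exactness of vector spaces over a field survives tensoring with `h⁻(N)`; so the
image of `h⁺(M ⊗ N)` in `C ⊗ h⁻(N)` comes from `M⁻ ⊗ h⁻(N)`, and it is `h⁻(M) ⊗ h⁻(N)`.
-/

open TensorProduct Function

section Basic

variable {M : Type*} [AddCommGroup M] (f : M →+ M)

/-- The inclusion `ker (id - f) → M` as a `ℤ`-linear map. -/
def kerPSubtype : kerP f →ₗ[ℤ] M :=
  (kerP f).subtype.toIntLinearMap

/-- The projection `ker (id - f) → h⁺(M, f)` as a `ℤ`-linear map. -/
def hPlusProj : kerP f →ₗ[ℤ] hPlus f :=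
  (QuotientAddGroup.mk' _).toIntLinearMap

/-- The map `id + f : M → im (id + f)`. -/
def toImP : M →ₗ[ℤ] imP f :=
  (AddMonoidHom.id M + f).rangeRestrict.toIntLinearMap

variable {f}

theorem mem_kerP_iff {x : M} : x ∈ kerP f ↔ f x = x :=
  sub_eq_zero.trans eq_comm

theorem mem_kerP_neg_iff {x : M} : x ∈ kerP (-f) ↔ f x = -x := by
  rw [mem_kerP_iff, AddMonoidHom.neg_apply, neg_eq_iff_eq_neg]

theorem involutive_neg (hf : Involutive f) : Involutive (-f) := fun x => by
  simp only [AddMonoidHom.neg_apply, map_neg, neg_neg, hf x]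

theorem hPlusMk_eq_zero_iff {x : M} {hx : x ∈ kerP f} :
    hPlusMk f x hx = 0 ↔ ∃ y, y + f y = x :=
  QuotientAddGroup.eq_zero_iff _

theorem hPlusMk_eq_hPlusMk_iff {x y : M} {hx : x ∈ kerP f} {hy : y ∈ kerP f} :
    hPlusMk f x hx = hPlusMk f y hy ↔ ∃ z, z + f z = x - y := by
  rw [← sub_eq_zero]
  exact hPlusMk_eq_zero_iff (hx := sub_mem hx hy)

theorem hPlusProj_surjective : Surjective (hPlusProj f) :=
  QuotientAddGroup.mk'_surjective _

theorem toImP_surjective : Surjective (toImP f) :=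
  AddMonoidHom.rangeRestrict_surjective _

theorem coe_toImP_neg (x : M) : (toImP (-f) x : M) = x - f x :=
  (sub_eq_add_neg x (f x)).symm

theorem toImP_neg_apply_involution (hf : Involutive f) (x : M) :
    toImP (-f) (f x) = -toImP (-f) x :=
  Subtype.ext <| by rw [NegMemClass.coe_neg, coe_toImP_neg, coe_toImP_neg, hf, neg_sub]

theorem exact_kerPSubtype_id_sub :
    Exact (kerPSubtype f) (LinearMap.id - f.toIntLinearMap : M →ₗ[ℤ] M) := fun x =>
  ⟨fun h => ⟨⟨x, h⟩, rfl⟩, by rintro ⟨y, rfl⟩; exact y.2⟩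

theorem exact_kerPSubtype_toImP_neg : Exact (kerPSubtype f) (toImP (-f)) := fun x => by
  rw [← exact_kerPSubtype_id_sub x, Subtype.ext_iff, coe_toImP_neg]
  rfl

/-- The norm `id + f : M → ker (id - f)` of an involution `f`. -/
def normMap (hf : Involutive f) : M →ₗ[ℤ] kerP f :=
  ((AddMonoidHom.id M + f).codRestrict (kerP f) fun x => mem_kerP_iff.2 <| by
    simp only [AddMonoidHom.add_apply, AddMonoidHom.id_apply, map_add, hf x, add_comm]
    ).toIntLinearMap

theorem exact_normMap_hPlusProj (hf : Involutive f) : Exact (normMap hf) (hPlusProj f) := fun x =>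
  hPlusMk_eq_zero_iff.trans <|
    exists_congr fun y => (Subtype.ext_iff (a1 := normMap hf y) (a2 := x)).symm

theorem exact_rTensor_kerPSubtype_toImP_neg (f : M →+ M) (N : Type*) [AddCommGroup N] :
    Exact ((kerPSubtype f).rTensor N) ((toImP (-f)).rTensor N) :=
  rTensor_exact N exact_kerPSubtype_toImP_neg toImP_surjective

theorem exact_rTensor_normMap_hPlusProj (hf : Involutive f) (N : Type*) [AddCommGroup N] :
    Exact ((normMap hf).rTensor N) ((hPlusProj f).rTensor N) :=
  rTensor_exact N (exact_normMap_hPlusProj hf) hPlusProj_surjective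

variable {M' M'' : Type*} [AddCommGroup M'] [AddCommGroup M''] {f' : M' →+ M'} {f'' : M'' →+ M''}

/-- The functoriality of `h⁺` in equivariant maps. -/
def hPlusMap (u : M →ₗ[ℤ] M') (hu : ∀ x, f' (u x) = u (f x)) : hPlus f →ₗ[ℤ] hPlus f' :=
  (QuotientAddGroup.map _ _
    ((u.toAddMonoidHom.comp (kerP f).subtype).codRestrict (kerP f') fun x =>
      mem_kerP_iff.2 ((hu x).trans (congrArg u (mem_kerP_iff.1 x.2))))
    (by
      rintro x ⟨y, hy⟩
      exact ⟨u y, by simpa [hu] using congrArg u hy⟩)).toIntLinearMap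

theorem hPlusMap_bijective {u : M →ₗ[ℤ] M'} (hu : ∀ x, f' (u x) = u (f x)) (hbij : Bijective u) :
    Bijective (hPlusMap u hu) := by
  constructor
  · refine (injective_iff_map_eq_zero _).2 fun t ht => ?_
    obtain ⟨x, rfl⟩ := hPlusProj_surjective t
    obtain ⟨y, hy⟩ := hPlusMk_eq_zero_iff.1 ht
    obtain ⟨z, rfl⟩ := hbij.2 y
    exact hPlusMk_eq_zero_iff.2 ⟨z, hbij.1 (by rw [map_add, ← hu, hy]; rfl)⟩
  · intro t
    obtain ⟨⟨y, hy⟩, rfl⟩ := hPlusProj_surjective t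
    obtain ⟨x, rfl⟩ := hbij.2 y
    have hx : x ∈ kerP f := mem_kerP_iff.2 (hbij.1 (by rw [← hu, mem_kerP_iff.1 hy]))
    exact ⟨hPlusMk f x hx, rfl⟩

theorem exact_hPlusMap (hf' : Involutive f') {i : M →ₗ[ℤ] M'} {p : M' →ₗ[ℤ] M''}
    (hi : ∀ x, f' (i x) = i (f x)) (hp : ∀ x, f'' (p x) = p (f' x)) (hinj : Injective i)
    (hsurj : Surjective p) (hex : Exact i p) : Exact (hPlusMap i hi) (hPlusMap p hp) := by
  intro t
  obtain ⟨⟨z, hz⟩, rfl⟩ := hPlusProj_surjective t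
  constructor
  · intro hpz
    obtain ⟨e, he⟩ := hPlusMk_eq_zero_iff.1 hpz
    obtain ⟨d, rfl⟩ := hsurj e
    obtain ⟨a, ha⟩ := (hex (z - (d + f' d))).1 <| by
      rw [map_sub, map_add, ← hp, he]
      exact sub_self _
    have ha_fixed : a ∈ kerP f := mem_kerP_iff.2 <| hinj <| by
      rw [← hi, ha, map_sub, map_add, hf' d, mem_kerP_iff.1 hz, add_comm (f' d)]
    refine ⟨hPlusMk f a ha_fixed, hPlusMk_eq_hPlusMk_iff.2 ⟨-d, ?_⟩⟩
    change -d + f' (-d) = i a - z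
    rw [ha, map_neg]
    abel
  · rintro ⟨s, hs⟩
    obtain ⟨a, rfl⟩ := hPlusProj_surjective s
    rw [← hs]
    exact hPlusMk_eq_zero_iff.2 ⟨0, by
      rw [map_zero, add_zero]; exact (hex.apply_apply_eq_zero a).symm⟩

end Basic

section Flat

variable {M : Type*} [AddCommGroup M] [Module.Flat ℤ M]

instance flat_addSubgroup (A : AddSubgroup M) : Module.Flat ℤ A :=
  inferInstanceAs (Module.Flat ℤ (AddSubgroup.toIntSubmodule A))

theorem rTensor_kerPSubtype_injective (f : M →+ M) (N : Type*) [AddCommGroup N] :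
    Injective ((kerPSubtype f).rTensor N) :=
  (LinearMap.lTensor_inj_iff_rTensor_inj N _).1 <|
    LinearMap.lTensor_injective_of_exact_of_flat (toImP (-f)) toImP_surjective (kerPSubtype f)
      Subtype.val_injective exact_kerPSubtype_toImP_neg N

end Flat

section TensorInv

variable {M N X : Type*} [AddCommGroup M] [AddCommGroup N] [AddCommGroup X]

theorem tensorInv_tmul (f : M →+ M) (g : N →+ N) (m : M) (n : N) :
    tensorInv f g (m ⊗ₜ n) = f m ⊗ₜ g n := rfl

theorem tensorInv_neg_left (f : M →+ M) (g : N →+ N) : tensorInv (-f) g = -tensorInv f g := by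
  ext z
  induction z with
  | zero => simp only [map_zero]
  | tmul m n => exact TensorProduct.neg_tmul _ _
  | add x y hx hy => rw [map_add, map_add, hx, hy]

theorem tensorInv_neg_right (f : M →+ M) (g : N →+ N) : tensorInv f (-g) = -tensorInv f g := by
  ext z
  induction z with
  | zero => simp only [map_zero]
  | tmul m n => exact TensorProduct.tmul_neg _ _
  | add x y hx hy => rw [map_add, map_add, hx, hy]

theorem tensorInv_neg_neg (f : M →+ M) (g : N →+ N) : tensorInv (-f) (-g) = tensorInv f g := by
  rw [tensorInv_neg_left, tensorInv_neg_right, neg_neg]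

theorem tensorInv_involutive {f : M →+ M} {g : N →+ N} (hf : Involutive f) (hg : Involutive g) :
    Involutive (tensorInv f g) := by
  intro z
  induction z with
  | zero => simp only [map_zero]
  | tmul m n => rw [tensorInv_tmul, tensorInv_tmul, hf, hg]
  | add x y hx hy => rw [map_add, map_add, hx, hy]

theorem tensorInv_rTensor {f : M →+ M} {a : X →+ X} (g : N →+ N) {u : X →ₗ[ℤ] M}
    (hu : ∀ x, f (u x) = u (a x)) (z : X ⊗[ℤ] N) :
    tensorInv f g (u.rTensor N z) = u.rTensor N (tensorInv a g z) := by
  induction z with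
  | zero => simp only [map_zero]
  | tmul x n => exact congrArg (· ⊗ₜ[ℤ] g n) (hu x)
  | add x y hx hy => simp only [map_add, hx, hy]

theorem tensorInv_comm (f : M →+ M) (g : N →+ N) (z : M ⊗[ℤ] N) :
    tensorInv g f (TensorProduct.comm ℤ M N z) = TensorProduct.comm ℤ M N (tensorInv f g z) :=
  TensorProduct.map_comm _ _ z

end TensorInv

section TensorHPlus

theorem rTensor_lTensor_comm {X Y N N' : Type*} [AddCommGroup X] [AddCommGroup Y] [AddCommGroup N]
    [AddCommGroup N'] (u : X →ₗ[ℤ] Y) (v : N →ₗ[ℤ] N') (z : X ⊗[ℤ] N) :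
    u.rTensor N' (v.lTensor X z) = v.lTensor Y (u.rTensor N z) := by
  rw [← LinearMap.comp_apply, ← LinearMap.comp_apply, LinearMap.rTensor_comp_lTensor,
    LinearMap.lTensor_comp_rTensor]

variable (X : Type*) {N : Type*} [AddCommGroup X] [AddCommGroup N] (g : N →+ N)

/-- The canonical map `X ⊗ h⁺(N, g) → h⁺(X ⊗ N, id ⊗ g)` sending `x ⊗ [n]` to `[x ⊗ n]`. -/
noncomputable def tensorHPlus :
    X ⊗[ℤ] hPlus g →ₗ[ℤ] hPlus (tensorInv (AddMonoidHom.id X) g) :=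
  TensorProduct.lift (AddMonoidHom.mk' (fun x => hPlusMap (TensorProduct.mk ℤ X N x) fun _ => rfl)
    fun x y => LinearMap.ext fun t => by
      obtain ⟨n, rfl⟩ := hPlusProj_surjective t
      exact congrArg _ (Subtype.ext (TensorProduct.add_tmul x y n.1))).toIntLinearMap

variable {X g}

theorem lTensor_kerPSubtype_mem_kerP (w : X ⊗[ℤ] kerP g) :
    (kerPSubtype g).lTensor X w ∈ kerP (tensorInv (AddMonoidHom.id X) g) := by
  induction w with
  | zero => rw [map_zero]; exact zero_mem _
  | tmul x n => exact mem_kerP_iff.2 (congrArg (x ⊗ₜ[ℤ] ·) (mem_kerP_iff.1 n.2))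
  | add v w hv hw => rw [map_add]; exact add_mem hv hw

theorem tensorHPlus_lTensor_hPlusProj (w : X ⊗[ℤ] kerP g) :
    tensorHPlus X g ((hPlusProj g).lTensor X w) =
      hPlusMk _ ((kerPSubtype g).lTensor X w) (lTensor_kerPSubtype_mem_kerP w) := by
  induction w with
  | zero => simp only [map_zero]; rfl
  | tmul x n => rfl
  | add v w hv hw => simp only [map_add, hv, hw]; rfl

theorem tensorHPlus_rTensor_lTensor_hPlusProj {Y : Type*} [AddCommGroup Y] (u : X →ₗ[ℤ] Y)
    (w : X ⊗[ℤ] kerP g) :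
    tensorHPlus Y g (u.rTensor _ ((hPlusProj g).lTensor X w)) =
      hPlusMk _ ((kerPSubtype g).lTensor Y (u.rTensor _ w)) (lTensor_kerPSubtype_mem_kerP _) := by
  rw [rTensor_lTensor_comm, tensorHPlus_lTensor_hPlusProj]

theorem exists_lTensor_kerPSubtype_eq [Module.Flat ℤ X] {z : X ⊗[ℤ] N}
    (hz : z ∈ kerP (tensorInv (AddMonoidHom.id X) g)) :
    ∃ w, (kerPSubtype g).lTensor X w = z :=
  (Module.Flat.lTensor_exact (M := X) exact_kerPSubtype_id_sub z).1 <| by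
    rw [LinearMap.lTensor_sub, LinearMap.lTensor_id]
    exact hz

theorem lTensor_kerPSubtype_lTensor_normMap (hg : Involutive g) (z : X ⊗[ℤ] N) :
    (kerPSubtype g).lTensor X ((normMap hg).lTensor X z) =
      z + tensorInv (AddMonoidHom.id X) g z := by
  induction z with
  | zero => simp only [map_zero, add_zero]
  | tmul x n => exact TensorProduct.tmul_add x n (g n)
  | add v w hv hw => simp only [map_add, hv, hw]; abel

theorem tensorHPlus_injective [Module.Flat ℤ X] (hg : Involutive g) :
    Injective (tensorHPlus X g) := by
  refine (injective_iff_map_eq_zero _).2 fun t ht => ?_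
  obtain ⟨w, rfl⟩ := LinearMap.lTensor_surjective X hPlusProj_surjective t
  rw [tensorHPlus_lTensor_hPlusProj, hPlusMk_eq_zero_iff] at ht
  obtain ⟨y, hy⟩ := ht
  rw [← lTensor_kerPSubtype_lTensor_normMap hg] at hy
  have hw : (normMap hg).lTensor X y = w :=
    Module.Flat.lTensor_preserves_injective_linearMap _ Subtype.val_injective hy
  rw [← hw]
  exact (lTensor_exact X (exact_normMap_hPlusProj hg) hPlusProj_surjective).apply_apply_eq_zero y

theorem tensorHPlus_surjective [Module.Flat ℤ X] : Surjective (tensorHPlus X g) := by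
  intro t
  obtain ⟨⟨z, hz⟩, rfl⟩ := hPlusProj_surjective t
  obtain ⟨w, rfl⟩ := exists_lTensor_kerPSubtype_eq hz
  exact ⟨_, tensorHPlus_lTensor_hPlusProj w⟩

end TensorHPlus

section ModTwo

theorem rTensor_injective_of_prime_nsmul_eq_zero {Y Z : Type*} [AddCommGroup Y] [AddCommGroup Z]
    {p : ℕ} (hp : p.Prime) (hZ : ∀ z : Z, p • z = 0) {i : Y →ₗ[ℤ] Z} (hi : Injective i)
    (H : Type*) [AddCommGroup H] : Injective (i.rTensor H) := by
  have := Fact.mk hp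
  have hY (y : Y) : p • y = 0 := hi (by rw [map_nsmul, map_zero, hZ])
  let _ := AddCommGroup.zmodModule hY
  let _ := AddCommGroup.zmodModule hZ
  obtain ⟨r, hr⟩ := (i.toAddMonoidHom.toZModLinearMap p).exists_leftInverse_of_injective
    (LinearMap.ker_eq_bot.2 hi)
  have hri : r.toAddMonoidHom.toIntLinearMap ∘ₗ i = LinearMap.id :=
    LinearMap.ext fun y => LinearMap.congr_fun hr y
  refine LeftInverse.injective (g := r.toAddMonoidHom.toIntLinearMap.rTensor H) fun t => ?_
  rw [← LinearMap.comp_apply, ← LinearMap.rTensor_comp, hri, LinearMap.rTensor_id,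
    LinearMap.id_apply]

theorem exact_rTensor_of_prime_nsmul_eq_zero {X Y Z : Type*} [AddCommGroup X] [AddCommGroup Y]
    [AddCommGroup Z] {p : ℕ} (hp : p.Prime) (hZ : ∀ z : Z, p • z = 0) {u : X →ₗ[ℤ] Y}
    {v : Y →ₗ[ℤ] Z} (huv : Exact u v) (H : Type*) [AddCommGroup H] :
    Exact (u.rTensor H) (v.rTensor H) := by
  have hv : v = v.range.subtype ∘ₗ v.rangeRestrict := rfl
  have hinj : Injective (v.range.subtype.rTensor H) :=
    rTensor_injective_of_prime_nsmul_eq_zero hp hZ Subtype.val_injective H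
  rw [hv, LinearMap.rTensor_comp]
  refine hinj.comp_exact_iff_exact.2 (rTensor_exact H ?_ v.surjective_rangeRestrict)
  exact fun y => Subtype.ext_iff.trans (huv y)

theorem modN_mkQ_eq_zero_iff {A : Type*} [AddCommGroup A] {n : ℕ} {x : A} :
    ModN.mkQ n x = 0 ↔ ∃ y, n • y = x := by
  refine (Submodule.Quotient.mk_eq_zero _).trans (exists_congr fun y => ?_)
  rw [LinearMap.lsmul_apply, natCast_zsmul]

theorem exists_rTensor_eq_of_rTensor_eq_zero {X Y Z : Type*} [AddCommGroup X] [AddCommGroup Y]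
    [AddCommGroup Z] {p : ℕ} (hp : p.Prime) {u : X →ₗ[ℤ] Y} {v : Y →ₗ[ℤ] Z}
    (huv : ∀ y, (∃ z, p • z = v y) ↔ ∃ x, u x = y) {H : Type*} [AddCommGroup H] {t : Y ⊗[ℤ] H}
    (ht : v.rTensor H t = 0) : ∃ s, u.rTensor H s = t := by
  have hex : Exact u ((ModN.mkQ p).toIntLinearMap ∘ₗ v) :=
    fun y => modN_mkQ_eq_zero_iff.trans (huv y)
  have hp_smul (z : ModN Z p) : p • z = 0 := ZModModule.char_nsmul_eq_zero p z
  refine (exact_rTensor_of_prime_nsmul_eq_zero hp hp_smul hex H t).1 ?_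
  rw [LinearMap.rTensor_comp, LinearMap.comp_apply, ht, map_zero]

end ModTwo

section Sequence

variable {M N : Type*} [AddCommGroup M] [AddCommGroup N] {f : M →+ M} {g : N →+ N}
  {σ : M ⊗[ℤ] N →+ M ⊗[ℤ] N}

theorem tensorInv_rTensor_kerPSubtype (hσ : σ = tensorInv f g) (z : kerP f ⊗[ℤ] N) :
    σ ((kerPSubtype f).rTensor N z) =
      (kerPSubtype f).rTensor N (tensorInv (AddMonoidHom.id _) g z) :=
  hσ ▸ tensorInv_rTensor g (fun x => mem_kerP_iff.1 x.2) z

theorem tensorInv_rTensor_toImP (hf : Involutive f) (g : N →+ N) (z : M ⊗[ℤ] N) :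
    tensorInv (AddMonoidHom.id _) (-g) ((toImP (-f)).rTensor N z) =
      (toImP (-f)).rTensor N (tensorInv f g z) := by
  rw [tensorInv_neg_right, ← tensorInv_neg_left]
  exact tensorInv_rTensor g (fun x => (toImP_neg_apply_involution hf x).symm) z

/-- The map `ker (id - f) ⊗ h⁺(N, g) → h⁺(M ⊗ N, σ)` sending `m ⊗ [n]` to `[m ⊗ n]`. -/
noncomputable def kerPCup (hσ : σ = tensorInv f g) : kerP f ⊗[ℤ] hPlus g →ₗ[ℤ] hPlus σ :=
  hPlusMap ((kerPSubtype f).rTensor N) (tensorInv_rTensor_kerPSubtype hσ) ∘ₗ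
    tensorHPlus (kerP f) g

/-- The map `h⁺(M ⊗ N, f ⊗ g) → h⁺(C ⊗ N, -(id ⊗ g))` induced by `id - f : M → C`, where
`C = im (id - f)` is encoded as `imP (-f)`. -/
noncomputable def hPlusToImP (hf : Involutive f) (g : N →+ N) :
    hPlus (tensorInv f g) →ₗ[ℤ] hPlus (tensorInv (AddMonoidHom.id (imP (-f))) (-g)) :=
  hPlusMap ((toImP (-f)).rTensor N) (tensorInv_rTensor_toImP hf g)

theorem exact_kerPCup_hPlusToImP [Module.Flat ℤ M] (hf : Involutive f) (hg : Involutive g) :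
    Exact (kerPCup (f := f) (g := g) rfl) (hPlusToImP hf g) := by
  refine tensorHPlus_surjective.comp_exact_iff_exact.2 ?_
  exact exact_hPlusMap (tensorInv_involutive hf hg) _ _ (rTensor_kerPSubtype_injective f N)
    (LinearMap.rTensor_surjective _ toImP_surjective)
    (exact_rTensor_kerPSubtype_toImP_neg f N)

theorem rTensor_lTensor_rTensor_normMap (hf : Involutive f) (y : M ⊗[ℤ] kerP g) :
    (kerPSubtype f).rTensor N ((kerPSubtype g).lTensor _ ((normMap hf).rTensor _ y)) =
      (kerPSubtype g).lTensor M y + tensorInv f g ((kerPSubtype g).lTensor M y) := by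
  induction y with
  | zero => simp only [map_zero, add_zero]
  | tmul m n =>
    refine (TensorProduct.add_tmul m (f m) (n : N)).trans ?_
    exact congrArg (m ⊗ₜ[ℤ] (n : N) + f m ⊗ₜ[ℤ] ·) (mem_kerP_iff.1 n.2).symm
  | add v w hv hw => simp only [map_add, hv, hw]; abel

theorem exists_connecting [Module.Flat ℤ M] (hf : Involutive f) {m : M ⊗[ℤ] N}
    {a : kerP f ⊗[ℤ] N} (ha : a ∈ kerP (tensorInv (AddMonoidHom.id _) g))
    (hma : m + tensorInv f g m = (kerPSubtype f).rTensor N a) :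
    ∃ (hm : (toImP (-f)).rTensor N m ∈ kerP (tensorInv (AddMonoidHom.id _) g))
      (w : M ⊗[ℤ] hPlus g),
      tensorHPlus _ g ((toImP (-f)).rTensor _ w) = hPlusMk _ _ hm ∧
      tensorHPlus _ g ((normMap hf).rTensor _ w) = hPlusMk _ a ha := by
  set P := (toImP (-f)).rTensor N with hP
  set I := (kerPSubtype f).rTensor N
  have hPI (b : kerP f ⊗[ℤ] N) : P (I b) = 0 :=
    (exact_rTensor_kerPSubtype_toImP_neg f N).apply_apply_eq_zero b
  have hm : P m ∈ kerP (tensorInv (AddMonoidHom.id _) g) := by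
    have h := tensorInv_rTensor_toImP hf g m
    rw [← hP, eq_sub_of_add_eq' hma, map_sub, hPI, zero_sub, tensorInv_neg_right] at h
    exact mem_kerP_iff.2 (neg_injective h)
  obtain ⟨c, hc⟩ := exists_lTensor_kerPSubtype_eq hm
  obtain ⟨y, rfl⟩ := LinearMap.rTensor_surjective _ toImP_surjective c
  have hPy : P (m - (kerPSubtype g).lTensor M y) = 0 := by
    rw [map_sub, ← hc, sub_eq_zero, hP, rTensor_lTensor_comm]
  obtain ⟨b, hb⟩ := (exact_rTensor_kerPSubtype_toImP_neg f N _).1 hPy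
  have hab : a - (kerPSubtype g).lTensor _ ((normMap hf).rTensor _ y) =
      b + tensorInv (AddMonoidHom.id _) g b := by
    refine rTensor_kerPSubtype_injective f N ?_
    rw [map_sub, map_add, ← hma, rTensor_lTensor_rTensor_normMap,
      ← tensorInv_rTensor_kerPSubtype rfl, hb, map_sub]
    abel
  refine ⟨hm, (hPlusProj g).lTensor M y, ?_, ?_⟩
  · rw [tensorHPlus_rTensor_lTensor_hPlusProj, hPlusMk_eq_hPlusMk_iff]
    exact ⟨0, by rw [map_zero, add_zero, hc, sub_self]⟩
  · rw [tensorHPlus_rTensor_lTensor_hPlusProj, eq_comm, hPlusMk_eq_hPlusMk_iff]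
    exact ⟨b, hab.symm⟩

theorem exists_rTensor_normMap_eq_of_kerPCup_eq_zero [Module.Flat ℤ M] (hf : Involutive f)
    (hg : Involutive g) {x : kerP f ⊗[ℤ] hPlus g} (hx : kerPCup (f := f) rfl x = 0) :
    ∃ w : M ⊗[ℤ] hPlus g, (normMap hf).rTensor _ w = x := by
  obtain ⟨⟨a, ha⟩, hax⟩ := hPlusProj_surjective (tensorHPlus (kerP f) g x)
  obtain ⟨m, hm⟩ : ∃ m, m + tensorInv f g m = (kerPSubtype f).rTensor N a := by
    rw [kerPCup, LinearMap.comp_apply, ← hax] at hx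
    exact hPlusMk_eq_zero_iff.1 hx
  obtain ⟨_, w, -, hw⟩ := exists_connecting hf ha hm
  exact ⟨w, tensorHPlus_injective hg (hw.trans hax)⟩

theorem exists_hPlusToImP_eq [Module.Flat ℤ M] (hf : Involutive f) (hg : Involutive g)
    (z : hPlus (tensorInv f g)) :
    ∃ w : M ⊗[ℤ] hPlus (-g), (normMap hf).rTensor _ w = 0 ∧
      tensorHPlus _ (-g) ((toImP (-f)).rTensor _ w) = hPlusToImP hf g z := by
  obtain ⟨⟨m, hm⟩, rfl⟩ := hPlusProj_surjective z
  have hm0 : m + tensorInv f (-g) m = (kerPSubtype f).rTensor N 0 := by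
    rw [tensorInv_neg_right, AddMonoidHom.neg_apply, mem_kerP_iff.1 hm, add_neg_cancel, map_zero]
  obtain ⟨_, w, hw, hw0⟩ := exists_connecting hf (zero_mem _) hm0
  exact ⟨w, tensorHPlus_injective (involutive_neg hg) (hw0.trans (map_zero _).symm), hw⟩

end Sequence

section Kernel

variable {M : Type*} [AddCommGroup M] {f : M →+ M}

theorem exists_rTensor_toImP_comp_kerPSubtype_eq (hf : Involutive f) {H : Type*} [AddCommGroup H]
    {w : M ⊗[ℤ] H} (hw : (normMap hf).rTensor H w = 0) :
    ∃ u : kerP (-f) ⊗[ℤ] H,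
      (toImP (-f) ∘ₗ kerPSubtype (-f)).rTensor H u = (toImP (-f)).rTensor H w := by
  have hsum (m : M) : (∃ b, 2 • b = normMap hf m) ↔
      ∃ ab, (kerPSubtype (-f)).coprod (kerPSubtype f) ab = m := by
    constructor
    · rintro ⟨b, hb⟩
      have hbm : (b : M) + b = m + f m := (two_nsmul (b : M)).symm.trans (congrArg Subtype.val hb)
      have ha : m - b ∈ kerP (-f) := mem_kerP_neg_iff.2 <| by
        rw [map_sub, mem_kerP_iff.1 b.2, neg_sub, sub_eq_sub_iff_add_eq_add, add_comm, hbm]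
      exact ⟨(⟨m - b, ha⟩, b), sub_add_cancel m (b : M)⟩
    · rintro ⟨⟨a, b⟩, rfl⟩
      refine ⟨b, Subtype.ext ?_⟩
      change 2 • (b : M) = (a + b : M) + f (a + b)
      rw [map_add, mem_kerP_neg_iff.1 a.2, mem_kerP_iff.1 b.2]
      abel
  obtain ⟨s, rfl⟩ := exists_rTensor_eq_of_rTensor_eq_zero Nat.prime_two hsum hw
  have hfst : toImP (-f) ∘ₗ (kerPSubtype (-f)).coprod (kerPSubtype f) =
      (toImP (-f) ∘ₗ kerPSubtype (-f)) ∘ₗ LinearMap.fst ℤ _ _ := by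
    refine LinearMap.ext fun ⟨a, b⟩ => ?_
    change toImP (-f) (kerPSubtype (-f) a + kerPSubtype f b) = toImP (-f) (kerPSubtype (-f) a)
    rw [map_add, exact_kerPSubtype_toImP_neg.apply_apply_eq_zero, add_zero]
  refine ⟨(LinearMap.fst ℤ _ _).rTensor H s, ?_⟩
  rw [← LinearMap.comp_apply, ← LinearMap.rTensor_comp, ← hfst, LinearMap.rTensor_comp,
    LinearMap.comp_apply]

theorem rTensor_hPlusProj_eq_zero_of_rTensor_toImP [IsAddTorsionFree M] (hf : Involutive f)
    {H : Type*} [AddCommGroup H] {v : kerP (-f) ⊗[ℤ] H}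
    (hv : (toImP (-f) ∘ₗ kerPSubtype (-f)).rTensor H v = 0) :
    (hPlusProj (-f)).rTensor H v = 0 := by
  have hdouble (a : kerP (-f)) : (toImP (-f) a : M) = 2 • (a : M) := by
    rw [coe_toImP_neg, mem_kerP_neg_iff.1 a.2, sub_neg_eq_add, two_nsmul]
  have hnorm (a : kerP (-f)) : (∃ c, 2 • c = (toImP (-f) ∘ₗ kerPSubtype (-f)) a) ↔
      ∃ m, normMap (involutive_neg hf) m = a := by
    have htf : Injective fun x : M => 2 • x := nsmul_right_injective two_ne_zero
    rw [toImP_surjective.exists]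
    refine exists_congr fun m => Subtype.ext_iff.trans <| (Eq.congr_right (hdouble a)).trans ?_
    exact htf.eq_iff.trans (Subtype.ext_iff (a1 := normMap (involutive_neg hf) m) (a2 := a)).symm
  obtain ⟨w, rfl⟩ := exists_rTensor_eq_of_rTensor_eq_zero Nat.prime_two hnorm hv
  exact (exact_rTensor_normMap_hPlusProj (involutive_neg hf) H).apply_apply_eq_zero w

end Kernel

section CupProduct

variable {M N : Type*} [AddCommGroup M] [AddCommGroup N] {f : M →+ M} {g : N →+ N}
  {σ : M ⊗[ℤ] N →+ M ⊗[ℤ] N}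

/-- `IsCupProduct f g σ φ` says that `φ : h⁺(M, f) ⊗ h⁺(N, g) → h⁺(M ⊗ N, σ)` is the cup product
`[m] ⊗ [n] ↦ [m ⊗ n]`. Replacing `f`, `g`, `σ` by their negatives gives the other signs. -/
def IsCupProduct (f : M →+ M) (g : N →+ N) (σ : M ⊗[ℤ] N →+ M ⊗[ℤ] N)
    (φ : hPlus f ⊗[ℤ] hPlus g →+ hPlus σ) : Prop :=
  ∀ (m : M) (hm : m ∈ kerP f) (n : N) (hn : n ∈ kerP g) (h : m ⊗ₜ[ℤ] n ∈ kerP σ),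
    φ (hPlusMk f m hm ⊗ₜ[ℤ] hPlusMk g n hn) = hPlusMk σ (m ⊗ₜ[ℤ] n) h

theorem kerPCup_tmul_eq_zero (hσ : σ = tensorInv f g) {m : kerP f} (hm : (m : M) ∈ imP f)
    (t : hPlus g) : kerPCup hσ (m ⊗ₜ t) = 0 := by
  subst hσ
  obtain ⟨y, hy⟩ := hm
  obtain ⟨n, rfl⟩ := hPlusProj_surjective t
  refine hPlusMk_eq_zero_iff.2 ⟨y ⊗ₜ (n : N), ?_⟩
  rw [tensorInv_tmul, mem_kerP_iff.1 n.2, ← TensorProduct.add_tmul]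
  exact congrArg (· ⊗ₜ[ℤ] (n : N)) hy

theorem exists_isCupProduct (hσ : σ = tensorInv f g) : ∃ φ, IsCupProduct f g σ φ := by
  have hker : (imP f).addSubgroupOf (kerP f) ≤
      (TensorProduct.curry (kerPCup hσ)).toAddMonoidHom.ker := fun _ hm =>
    LinearMap.ext (kerPCup_tmul_eq_zero hσ hm)
  refine ⟨(TensorProduct.lift
    (QuotientAddGroup.lift _ _ hker).toIntLinearMap).toAddMonoidHom, fun _ _ _ _ _ => rfl⟩

theorem IsCupProduct.apply_rTensor_hPlusProj {φ : hPlus f ⊗[ℤ] hPlus g →+ hPlus σ}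
    (hφ : IsCupProduct f g σ φ) (hσ : σ = tensorInv f g) (x : kerP f ⊗[ℤ] hPlus g) :
    φ ((hPlusProj f).rTensor _ x) = kerPCup hσ x := by
  induction x with
  | zero => simp only [map_zero]
  | tmul m t =>
    obtain ⟨n, rfl⟩ := hPlusProj_surjective t
    exact hφ m m.2 n n.2 _
  | add x y hx hy => rw [map_add, map_add, map_add, hx, hy]

theorem hPlusToImP_kerPCup_neg (hf : Involutive f) (x : kerP (-f) ⊗[ℤ] hPlus (-g)) :
    hPlusToImP hf g (kerPCup (tensorInv_neg_neg f g).symm x) =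
      tensorHPlus _ (-g) ((toImP (-f) ∘ₗ kerPSubtype (-f)).rTensor _ x) := by
  induction x with
  | zero => simp only [map_zero]
  | tmul m t =>
    obtain ⟨n, rfl⟩ := hPlusProj_surjective t
    rfl
  | add x y hx hy => simp only [map_add, hx, hy]

theorem IsCupProduct.injective_coprod [Module.Flat ℤ M] (hf : Involutive f) (hg : Involutive g)
    {φ : hPlus f ⊗[ℤ] hPlus g →+ hPlus (tensorInv f g)}
    {ψ : hPlus (-f) ⊗[ℤ] hPlus (-g) →+ hPlus (tensorInv f g)}
    (hφ : IsCupProduct f g _ φ) (hψ : IsCupProduct (-f) (-g) _ ψ) :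
    Injective (φ.coprod ψ) := by
  have : IsAddTorsionFree M := Module.isTorsionFree_int_iff_isAddTorsionFree.1 inferInstance
  refine (injective_iff_map_eq_zero _).2 fun ⟨s, t⟩ hst => ?_
  obtain ⟨x, rfl⟩ := LinearMap.rTensor_surjective _ hPlusProj_surjective s
  obtain ⟨y, rfl⟩ := LinearMap.rTensor_surjective _ hPlusProj_surjective t
  rw [AddMonoidHom.coprod_apply, hφ.apply_rTensor_hPlusProj rfl] at hst
  have hy : (hPlusProj (-f)).rTensor _ y = 0 := by
    refine rTensor_hPlusProj_eq_zero_of_rTensor_toImP hf <|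
      tensorHPlus_injective (involutive_neg hg) ?_
    rw [hψ.apply_rTensor_hPlusProj (tensorInv_neg_neg f g).symm] at hst
    have h := congrArg (hPlusToImP hf g) hst
    rwa [map_add, (exact_kerPCup_hPlusToImP hf hg).apply_apply_eq_zero, zero_add, map_zero,
      hPlusToImP_kerPCup_neg, ← map_zero (tensorHPlus _ (-g))] at h
  rw [hy, map_zero, add_zero] at hst
  obtain ⟨w, rfl⟩ := exists_rTensor_normMap_eq_of_kerPCup_eq_zero hf hg hst
  rw [hy, (exact_rTensor_normMap_hPlusProj hf _).apply_apply_eq_zero]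
  rfl

theorem IsCupProduct.surjective_coprod [Module.Flat ℤ M] (hf : Involutive f) (hg : Involutive g)
    {φ : hPlus f ⊗[ℤ] hPlus g →+ hPlus (tensorInv f g)}
    {ψ : hPlus (-f) ⊗[ℤ] hPlus (-g) →+ hPlus (tensorInv f g)}
    (hφ : IsCupProduct f g _ φ) (hψ : IsCupProduct (-f) (-g) _ ψ) :
    Surjective (φ.coprod ψ) := by
  intro z
  obtain ⟨w, hw, hwz⟩ := exists_hPlusToImP_eq hf hg z
  obtain ⟨y, hy⟩ := exists_rTensor_toImP_comp_kerPSubtype_eq hf hw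
  rw [← hy, ← hPlusToImP_kerPCup_neg hf] at hwz
  obtain ⟨x, hx⟩ := (exact_kerPCup_hPlusToImP hf hg _).1 <|
    (map_sub (hPlusToImP hf g) z _).trans (sub_eq_zero.2 hwz.symm)
  refine ⟨((hPlusProj f).rTensor _ x, (hPlusProj (-f)).rTensor _ y), ?_⟩
  rw [AddMonoidHom.coprod_apply, hφ.apply_rTensor_hPlusProj rfl,
    hψ.apply_rTensor_hPlusProj (tensorInv_neg_neg f g).symm, hx, sub_add_cancel]

theorem IsCupProduct.bijective_coprod_of_flat_left [Module.Flat ℤ M] (hf : Involutive f)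
    (hg : Involutive g) {φ : hPlus f ⊗[ℤ] hPlus g →+ hPlus (tensorInv f g)}
    {ψ : hPlus (-f) ⊗[ℤ] hPlus (-g) →+ hPlus (tensorInv f g)}
    (hφ : IsCupProduct f g _ φ) (hψ : IsCupProduct (-f) (-g) _ ψ) : Bijective (φ.coprod ψ) :=
  ⟨hφ.injective_coprod hf hg hψ, hφ.surjective_coprod hf hg hψ⟩

/-- The map `h⁺(M ⊗ N) → h⁺(N ⊗ M)` induced by exchanging the factors. -/
noncomputable def hPlusTensorComm (f : M →+ M) (g : N →+ N) :
    hPlus (tensorInv f g) →ₗ[ℤ] hPlus (tensorInv g f) :=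
  hPlusMap (TensorProduct.comm ℤ M N).toLinearMap (tensorInv_comm f g)

theorem hPlusTensorComm_bijective : Bijective (hPlusTensorComm f g) :=
  hPlusMap_bijective _ (TensorProduct.comm ℤ M N).bijective

theorem IsCupProduct.comm {f' : M →+ M} {g' : N →+ N}
    {φ : hPlus f ⊗[ℤ] hPlus g →+ hPlus (tensorInv f' g')} (hφ : IsCupProduct f g _ φ) :
    IsCupProduct g f (tensorInv g' f') <|
      (hPlusTensorComm f' g').toAddMonoidHom.comp <|
        φ.comp (TensorProduct.comm ℤ (hPlus g) (hPlus f)).toLinearMap.toAddMonoidHom :=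
  fun n hn m hm h => congrArg (hPlusTensorComm f' g') <| hφ m hm n hn <| mem_kerP_iff.2 <|
    (tensorInv_comm g' f' _).trans (congrArg (TensorProduct.comm ℤ N M) (mem_kerP_iff.1 h))

theorem IsCupProduct.bijective_coprod_of_flat_right [Module.Flat ℤ N] (hf : Involutive f)
    (hg : Involutive g) {φ : hPlus f ⊗[ℤ] hPlus g →+ hPlus (tensorInv f g)}
    {ψ : hPlus (-f) ⊗[ℤ] hPlus (-g) →+ hPlus (tensorInv f g)}
    (hφ : IsCupProduct f g _ φ) (hψ : IsCupProduct (-f) (-g) _ ψ) : Bijective (φ.coprod ψ) := by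
  have h := hφ.comm.bijective_coprod_of_flat_left hg hf hψ.comm
  have hcomm : Bijective (Prod.map (TensorProduct.comm ℤ (hPlus g) (hPlus f))
      (TensorProduct.comm ℤ (hPlus (-g)) (hPlus (-f)))) :=
    (TensorProduct.comm ℤ _ _).bijective.prodMap (TensorProduct.comm ℤ _ _).bijective
  rw [← hcomm.of_comp_iff, ← hPlusTensorComm_bijective.of_comp_iff']
  convert h using 1
  ext x
  exact map_add (hPlusTensorComm f g) _ _

theorem IsCupProduct.bijective_coprod (hMN : Module.Flat ℤ M ∨ Module.Flat ℤ N) (hf : Involutive f)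
    (hg : Involutive g) {g' : N →+ N} (hg' : g' = -g) (hσ : σ = tensorInv f g)
    {φ : hPlus f ⊗[ℤ] hPlus g →+ hPlus σ} {ψ : hPlus (-f) ⊗[ℤ] hPlus g' →+ hPlus σ}
    (hφ : IsCupProduct f g σ φ) (hψ : IsCupProduct (-f) g' σ ψ) : Bijective (φ.coprod ψ) := by
  subst hg' hσ
  obtain hM | hN := hMN
  · exact hφ.bijective_coprod_of_flat_left hf hg hψ
  · exact hφ.bijective_coprod_of_flat_right hf hg hψ

end CupProduct

theorem statement4_general {M N : Type*} [AddCommGroup M] [AddCommGroup N]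
    (τM : M →+ M) (τN : N →+ N) (hτM : Involutive τM) (hτN : Involutive τN) :
    (∃ φ, IsCupProduct τM τN (tensorInv τM τN) φ) ∧
    (∃ φ, IsCupProduct (-τM) (-τN) (tensorInv τM τN) φ) ∧
    (∃ φ, IsCupProduct τM (-τN) (-tensorInv τM τN) φ) ∧
    (∃ φ, IsCupProduct (-τM) τN (-tensorInv τM τN) φ) ∧
    (Module.Flat ℤ M ∨ Module.Flat ℤ N →
      ∀ (φpp : hPlus τM ⊗[ℤ] hPlus τN →+ hPlus (tensorInv τM τN))
        (φmm : hPlus (-τM) ⊗[ℤ] hPlus (-τN) →+ hPlus (tensorInv τM τN))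
        (φpm : hPlus τM ⊗[ℤ] hPlus (-τN) →+ hPlus (-tensorInv τM τN))
        (φmp : hPlus (-τM) ⊗[ℤ] hPlus τN →+ hPlus (-tensorInv τM τN)),
        IsCupProduct τM τN _ φpp → IsCupProduct (-τM) (-τN) _ φmm →
        IsCupProduct τM (-τN) _ φpm → IsCupProduct (-τM) τN _ φmp →
        Bijective (fun q : _ × _ => φpp q.1 + φmm q.2) ∧
        Bijective (fun q : _ × _ => φpm q.1 + φmp q.2)) := by
  have hσpm : -tensorInv τM τN = tensorInv τM (-τN) := (tensorInv_neg_right τM τN).symm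
  have hσmp : -tensorInv τM τN = tensorInv (-τM) τN := (tensorInv_neg_left τM τN).symm
  refine ⟨exists_isCupProduct rfl, exists_isCupProduct (tensorInv_neg_neg τM τN).symm,
    exists_isCupProduct hσpm, exists_isCupProduct hσmp,
    fun hMN φpp φmm φpm φmp hpp hmm hpm hmp => ⟨?_, ?_⟩⟩
  · exact hpp.bijective_coprod hMN hτM hτN rfl rfl hmm
  · exact hpm.bijective_coprod hMN hτM (involutive_neg hτN) (neg_neg τN).symm hσpm hmp

open TensorProduct in
/-- Let `M`, `N` be abelian groups with involutions `⋆`, and equip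
`M ⊗_ℤ N` with the involution `(m ⊗ n)⋆ = m⋆ ⊗ n⋆`.  Then `([m],[n]) ↦ [m ⊗ n]` induces
well-defined homomorphisms `h^ε(M) ⊗ h^{ε'}(N) →+ h^{εε'}(M ⊗ N)` for all four sign
combinations (with `h⁺(−,g) = hPlus g` and `h⁻(−,g) = hPlus (-g)`), and if `M` or `N` is
free as an abelian group the resulting canonical maps
`(h⁺M ⊗ h⁺N) ⊕ (h⁻M ⊗ h⁻N) → h⁺(M ⊗ N)` and `(h⁺M ⊗ h⁻N) ⊕ (h⁻M ⊗ h⁺N) → h⁻(M ⊗ N)`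
are isomorphisms. -/
theorem statement4
    {M N : Type*} [AddCommGroup M] [AddCommGroup N]
    (τM : M →+ M) (τN : N →+ N)
    (hτM : ∀ x, τM (τM x) = x) (hτN : ∀ x, τN (τN x) = x) :
    -- the four well-defined maps on Tate cohomology
    (∃ φ : TensorProduct ℤ (hPlus τM) (hPlus τN) →+ hPlus (tensorInv τM τN),
      ∀ (m : M) (hm : m ∈ kerP τM) (n : N) (hn : n ∈ kerP τN)
        (h : m ⊗ₜ[ℤ] n ∈ kerP (tensorInv τM τN)),
        φ (hPlusMk τM m hm ⊗ₜ[ℤ] hPlusMk τN n hn) = hPlusMk _ (m ⊗ₜ[ℤ] n) h) ∧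
    (∃ φ : TensorProduct ℤ (hPlus (-τM)) (hPlus (-τN)) →+ hPlus (tensorInv τM τN),
      ∀ (m : M) (hm : m ∈ kerP (-τM)) (n : N) (hn : n ∈ kerP (-τN))
        (h : m ⊗ₜ[ℤ] n ∈ kerP (tensorInv τM τN)),
        φ (hPlusMk (-τM) m hm ⊗ₜ[ℤ] hPlusMk (-τN) n hn) = hPlusMk _ (m ⊗ₜ[ℤ] n) h) ∧
    (∃ φ : TensorProduct ℤ (hPlus τM) (hPlus (-τN)) →+ hPlus (-(tensorInv τM τN)),
      ∀ (m : M) (hm : m ∈ kerP τM) (n : N) (hn : n ∈ kerP (-τN))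
        (h : m ⊗ₜ[ℤ] n ∈ kerP (-(tensorInv τM τN))),
        φ (hPlusMk τM m hm ⊗ₜ[ℤ] hPlusMk (-τN) n hn) = hPlusMk _ (m ⊗ₜ[ℤ] n) h) ∧
    (∃ φ : TensorProduct ℤ (hPlus (-τM)) (hPlus τN) →+ hPlus (-(tensorInv τM τN)),
      ∀ (m : M) (hm : m ∈ kerP (-τM)) (n : N) (hn : n ∈ kerP τN)
        (h : m ⊗ₜ[ℤ] n ∈ kerP (-(tensorInv τM τN))),
        φ (hPlusMk (-τM) m hm ⊗ₜ[ℤ] hPlusMk τN n hn) = hPlusMk _ (m ⊗ₜ[ℤ] n) h) ∧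
    -- if `M` or `N` is free, the canonical maps are isomorphisms
    ((Module.Free ℤ M ∨ Module.Free ℤ N) →
      ∀ (φpp : TensorProduct ℤ (hPlus τM) (hPlus τN) →+ hPlus (tensorInv τM τN))
        (φmm : TensorProduct ℤ (hPlus (-τM)) (hPlus (-τN)) →+ hPlus (tensorInv τM τN))
        (φpm : TensorProduct ℤ (hPlus τM) (hPlus (-τN)) →+ hPlus (-(tensorInv τM τN)))
        (φmp : TensorProduct ℤ (hPlus (-τM)) (hPlus τN) →+ hPlus (-(tensorInv τM τN))),
        (∀ (m : M) (hm : m ∈ kerP τM) (n : N) (hn : n ∈ kerP τN)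
          (h : m ⊗ₜ[ℤ] n ∈ kerP (tensorInv τM τN)),
          φpp (hPlusMk τM m hm ⊗ₜ[ℤ] hPlusMk τN n hn) = hPlusMk _ (m ⊗ₜ[ℤ] n) h) →
        (∀ (m : M) (hm : m ∈ kerP (-τM)) (n : N) (hn : n ∈ kerP (-τN))
          (h : m ⊗ₜ[ℤ] n ∈ kerP (tensorInv τM τN)),
          φmm (hPlusMk (-τM) m hm ⊗ₜ[ℤ] hPlusMk (-τN) n hn) = hPlusMk _ (m ⊗ₜ[ℤ] n) h) →
        (∀ (m : M) (hm : m ∈ kerP τM) (n : N) (hn : n ∈ kerP (-τN))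
          (h : m ⊗ₜ[ℤ] n ∈ kerP (-(tensorInv τM τN))),
          φpm (hPlusMk τM m hm ⊗ₜ[ℤ] hPlusMk (-τN) n hn) = hPlusMk _ (m ⊗ₜ[ℤ] n) h) →
        (∀ (m : M) (hm : m ∈ kerP (-τM)) (n : N) (hn : n ∈ kerP τN)
          (h : m ⊗ₜ[ℤ] n ∈ kerP (-(tensorInv τM τN))),
          φmp (hPlusMk (-τM) m hm ⊗ₜ[ℤ] hPlusMk τN n hn) = hPlusMk _ (m ⊗ₜ[ℤ] n) h) →
        Function.Bijective
          (fun q : TensorProduct ℤ (hPlus τM) (hPlus τN) ×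
              TensorProduct ℤ (hPlus (-τM)) (hPlus (-τN)) => φpp q.1 + φmm q.2) ∧
        Function.Bijective
          (fun q : TensorProduct ℤ (hPlus τM) (hPlus (-τN)) ×
              TensorProduct ℤ (hPlus (-τM)) (hPlus τN) => φpm q.1 + φmp q.2)) := by
  obtain ⟨hpp, hmm, hpm, hmp, hbij⟩ := statement4_general τM τN hτM hτN
  exact ⟨hpp, hmm, hpm, hmp, fun h => hbij <|
    h.imp (@Module.Flat.of_free ℤ M _ _ _) (@Module.Flat.of_free ℤ N _ _ _)⟩
end

section
/- For every t ∈ ℤ^K one has h⁻(A, x^t) = 0; that is, the Tate cohomology of the twisted polynomial ring A with respect to any twisted involution ⋆_t is concentrated in the even part h⁺. -/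
def kerM {M : Type*} [AddCommGroup M] (f : M →+ M) : AddSubgroup M :=
  (AddMonoidHom.id M + f).ker

def imM {M : Type*} [AddCommGroup M] (f : M →+ M) : AddSubgroup M :=
  (AddMonoidHom.id M - f).range

abbrev hMinus {M : Type*} [AddCommGroup M] (f : M →+ M) :=
  kerM f ⧸ (imM f).addSubgroupOf (kerM f)

def hMinusMk {M : Type*} [AddCommGroup M] (f : M →+ M) (x : M) (hx : x ∈ kerM f) :
    hMinus f := QuotientAddGroup.mk ⟨x, hx⟩


/-! ### The twisted polynomial ring and its duality involution -/

abbrev TwGens (I J : Type) := (I × Bool) ⊕ J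
abbrev TwMon (I J K : Type) := (TwGens I J → ℕ) × (K → ℤ)
abbrev TwPolyRing (I J K : Type) := AddMonoidAlgebra ℤ (TwMon I J K)

variable {I J K : Type}

def twSwap : TwGens I J → TwGens I J
  | Sum.inl (i, b) => Sum.inl (i, !b)
  | Sum.inr j => Sum.inr j

def twTwist [Fintype I] [Fintype J] (c : I → K → ℤ) (m : J → K → ℤ)
    (f : TwGens I J → ℕ) : K → ℤ :=
  fun k => (∑ i : I, ((f (Sum.inl (i, false)) : ℤ) + (f (Sum.inl (i, true)) : ℤ)) * c i k)
    + ∑ j : J, (f (Sum.inr j) : ℤ) * m j k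

lemma twTwist_add [Fintype I] [Fintype J] (c : I → K → ℤ) (m : J → K → ℤ)
    (f f' : TwGens I J → ℕ) :
    twTwist c m (f + f') = twTwist c m f + twTwist c m f' := by
  funext k
  simp only [twTwist, Pi.add_apply, Nat.cast_add, add_mul, Finset.sum_add_distrib]
  ring

lemma twTwist_zero [Fintype I] [Fintype J] (c : I → K → ℤ) (m : J → K → ℤ) :
    twTwist c m (0 : TwGens I J → ℕ) = 0 := by
  funext k
  simp [twTwist]

def twStarMon [Fintype I] [Fintype J] (c : I → K → ℤ) (m : J → K → ℤ) :
    TwMon I J K →+ TwMon I J K where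
  toFun := fun fg => (fg.1 ∘ twSwap, -fg.2 + twTwist c m fg.1)
  map_zero' := by
    refine Prod.ext rfl ?_
    simp [twTwist_zero]
  map_add' := by
    rintro ⟨f, g⟩ ⟨f', g'⟩
    refine Prod.ext rfl ?_
    show -(g + g') + twTwist c m (f + f') = (-g + twTwist c m f) + (-g' + twTwist c m f')
    rw [twTwist_add]
    abel

noncomputable def twStar [Fintype I] [Fintype J] (c : I → K → ℤ) (m : J → K → ℤ) :
    TwPolyRing I J K →+* TwPolyRing I J K :=
  AddMonoidAlgebra.mapDomainRingHom ℤ (twStarMon c m)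

noncomputable def twX (t : K → ℤ) : TwPolyRing I J K :=
  AddMonoidAlgebra.single ((0 : TwGens I J → ℕ), t) 1

noncomputable def twStarT [Fintype I] [Fintype J] (c : I → K → ℤ) (m : J → K → ℤ)
    (t : K → ℤ) : TwPolyRing I J K →+ TwPolyRing I J K :=
  (AddMonoidHom.mulRight (twX t)).comp (twStar c m).toAddMonoidHom

/-!
The twisted involution permutes the `ℤ`-basis of monomials of `A`. An element `a` with
`a + a⋆ = 0` has opposite coefficients at the two points of a free orbit, and coefficient `0` at a
fixed point because `ℤ` has no `2`-torsion. Keeping the coefficients of `a` at one point of each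
free orbit gives `b` with `a = b - b⋆`.
-/

theorem subsingleton_hMinus_iff {M : Type*} [AddCommGroup M] (f : M →+ M) :
    Subsingleton (hMinus f) ↔ kerM f ≤ imM f := by
  rw [QuotientAddGroup.subsingleton_iff, AddSubgroup.addSubgroupOf_eq_top]

section PermutationModule

theorem exists_eq_sub_comp_of_involutive {X A : Type*} [AddGroup A] {σ : X → X}
    (hσ : Function.Involutive σ) (a : X →₀ A) (hanti : ∀ x, a (σ x) = -a x)
    (hfix : ∀ x, σ x = x → a x = 0) :
    ∃ b : X →₀ A, ∀ x, a x = b x - b (σ x) := by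
  obtain ⟨_, _⟩ := exists_wellFoundedLT X
  -- The smaller point of each free orbit of `σ` serves as its representative.
  refine ⟨a.filter fun x ↦ x < σ x, fun x ↦ ?_⟩
  simp only [Finsupp.filter_apply, hσ x]
  rcases lt_trichotomy x (σ x) with hlt | heq | hgt
  · simp [hlt, hlt.not_gt]
  · simp [← heq, hfix x heq.symm]
  · simp [hgt, hgt.not_gt, hanti]

theorem kerM_le_imM_of_coordinate_involution {M X A : Type*} [AddCommGroup M] [AddCommGroup A]
    (hA : IsSMulRegular A (2 : ℕ)) (φ : M ≃+ (X →₀ A)) {σ : X → X} (hσ : Function.Involutive σ)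
    {f : M →+ M} (hf : ∀ a x, φ (f a) x = φ a (σ x)) :
    kerM f ≤ imM f := by
  intro a ha
  have hanti (x : X) : φ a (σ x) = -φ a x := by
    have hsum : a + f a = 0 := ha
    rw [← hf, eq_neg_iff_add_eq_zero, add_comm, ← Finsupp.add_apply, ← map_add, hsum, map_zero,
      Finsupp.zero_apply]
  have hfix (x : X) (hx : σ x = x) : φ a x = 0 := by
    have hself : φ a x = -φ a x := by simpa only [hx] using hanti x
    exact hA.right_eq_zero_of_smul (by rw [two_nsmul, ← eq_neg_iff_add_eq_zero, ← hself])
  obtain ⟨b, hb⟩ := exists_eq_sub_comp_of_involutive hσ (φ a) hanti hfix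
  refine ⟨φ.symm b, φ.injective (Finsupp.ext fun x ↦ ?_)⟩
  simp [hf, hb]

end PermutationModule

section Monomials

theorem twSwap_involutive : Function.Involutive (twSwap : TwGens I J → TwGens I J) := by
  rintro (⟨i, b⟩ | j) <;> simp [twSwap]

variable [Fintype I] [Fintype J] (c : I → K → ℤ) (m : J → K → ℤ) (t : K → ℤ)

theorem twTwist_comp_twSwap (f : TwGens I J → ℕ) :
    twTwist c m (f ∘ twSwap) = twTwist c m f := by
  funext k
  simp [twTwist, twSwap, add_comm]

/-- The action of the twisted involution `⋆_t` on exponents of monomials. -/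
def twStarTMon (g : TwMon I J K) : TwMon I J K :=
  twStarMon c m g + (0, t)

theorem twStarTMon_mk (f : TwGens I J → ℕ) (v : K → ℤ) :
    twStarTMon c m t (f, v) = (f ∘ twSwap, -v + twTwist c m f + t) := by
  simp [twStarTMon, twStarMon]

theorem twStarTMon_involutive : Function.Involutive (twStarTMon c m t) := by
  rintro ⟨f, v⟩
  rw [twStarTMon_mk, twStarTMon_mk, twTwist_comp_twSwap, Function.comp_assoc,
    twSwap_involutive.comp_self, Function.comp_id]
  refine Prod.ext rfl (funext fun k ↦ ?_)
  simp only [Pi.add_apply, Pi.neg_apply]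
  ring

theorem twStarT_eq_mapDomainAddEquiv :
    twStarT c m t = (AddMonoidAlgebra.mapDomainAddEquiv ℤ
      (twStarTMon_involutive c m t).toPerm).toAddMonoidHom := by
  ext g : 2
  simp [twStarT, twStar, twX, twStarTMon, AddMonoidAlgebra.single_mul_single]

theorem coeff_twStarT (a : TwPolyRing I J K) (g : TwMon I J K) :
    (twStarT c m t a).coeff g = a.coeff (twStarTMon c m t g) := by
  simp [twStarT_eq_mapDomainAddEquiv]

end Monomials

theorem statement7_general {I J K : Type} [Fintype I] [Fintype J]
    (c : I → K → ℤ) (m : J → K → ℤ) (t : K → ℤ) :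
    ∀ z : hMinus (twStarT c m t), z = 0 := by
  have two_regular : IsSMulRegular ℤ (2 : ℕ) := nsmul_right_injective two_ne_zero
  have vanishing : Subsingleton (hMinus (twStarT c m t)) := by
    rw [subsingleton_hMinus_iff]
    exact kerM_le_imM_of_coordinate_involution two_regular AddMonoidAlgebra.coeffAddEquiv
      (twStarTMon_involutive c m t) (coeff_twStarT c m t)
  exact fun z ↦ Subsingleton.elim z 0

/-- For every `t ∈ ℤ^K` one has `h⁻(A, x^t) = 0`: the Tate cohomology of
the twisted polynomial ring `A` with respect to any twisted involution `⋆_t` is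
concentrated in the even part `h⁺`. -/
theorem statement7 {I J K : Type} [Fintype I] [Fintype J] [Fintype K]
    (c : I → K → ℤ) (m : J → K → ℤ) (t : K → ℤ) :
    ∀ z : hMinus (twStarT c m t), z = 0 :=
  statement7_general c m t
end

section
/- Let (A,⋆) be a ⋆-ring, l ∈ A^× a unit with l⋆ = l⁻¹, and ζ ∈ A a ⋆_l-self-dual element (ζ⋆·l = ζ) such that multiplication by ζ induces isomorphisms h⁺(A,⋆) → h⁺(A,⋆_l) and h⁻(A,⋆) → h⁻(A,⋆_l). Then: (a) for every μ ∈ A with μ⋆ = μ which is not a zero divisor, the ideal A·μ is stable under ⋆ and under ⋆_l, both involutions descend to the quotient ring A/Aμ, and multiplication by the class of ζ induces isomorphisms h^±(A/Aμ, ⋆) → h^±(A/Aμ, ⋆_l); (b) for every λ ∈ A such that λ, λ⋆ is a regular sequence on A, the ideal 𝔞 := Aλ + Aλ⋆ is stable under ⋆ and under ⋆_l, both involutions descend to A/𝔞, and multiplication by the class of ζ induces isomorphisms h^±(A/𝔞, ⋆) → h^±(A/𝔞, ⋆_l). -/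
/-- The `l`-twisted involution `a ↦ a⋆ · l` on a `⋆`-ring `A`. -/
def twistL {A : Type*} [CommRing A] (σ : A →+* A) (l : A) : A →+ A :=
  (AddMonoidHom.mulRight l).comp σ.toAddMonoidHom

/- Multiplication by `ζ` is a homomorphism of 2-periodic complexes, and it induces isomorphisms on
`h⁺` and `h⁻` exactly when its mapping cone is exact. Exactness passes along exact sequences of
complexes, so in (a) one uses `0 → A → A → A/Aμ → 0`, and in (b) the Koszul sequence
`0 → A → A × A → A → A/𝔞 → 0`. In the latter the involution on `A × A` interchanges the factors,
which makes all of its Tate cohomology vanish, and the one on the leftmost `A` is `-⋆`, which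
merely interchanges `h⁺` and `h⁻`. -/

open Function

section PeriodicHomology

variable {M N : Type*} [AddCommGroup M] [AddCommGroup N]

/-- The homology `ker d / im e` of a 2-periodic complex `⋯ → M --e→ M --d→ M --e→ M → ⋯`.
Up to unfolding, `hPlus f` is the case `e = 1 + f`, `d = 1 - f`, and `hMinus f` is the case
`e = 1 - f`, `d = 1 + f`. -/
abbrev PeriodicHomology (e d : M →+ M) : Type _ :=
  d.ker ⧸ e.range.addSubgroupOf d.ker

/-- The homomorphism on homology induced by a homomorphism of 2-periodic complexes. -/
def PeriodicHomology.map {e d : M →+ M} {e' d' : N →+ N} (z : M →+ N)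
    (he : Semiconj z e e') (hd : Semiconj z d d') :
    PeriodicHomology e d →+ PeriodicHomology e' d' :=
  QuotientAddGroup.map _ _
    ((z.comp d.ker.subtype).codRestrict d'.ker fun x ↦ by
      rw [AddMonoidHom.mem_ker, AddMonoidHom.comp_apply, ← hd]
      exact (congrArg z x.2).trans (map_zero z))
    (by
      rintro x ⟨w, hw⟩
      exact ⟨z w, (he w).symm.trans (congrArg z hw)⟩)

variable {e d : M →+ M} {e' d' : N →+ N} {z : M →+ N}

theorem PeriodicHomology.map_injective_iff (he : Semiconj z e e') (hd : Semiconj z d d') :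
    Injective (map z he hd) ↔ ∀ x y, d x = 0 → z x = e' y → ∃ u, e u = x := by
  rw [injective_iff_map_eq_zero]
  constructor
  · intro h x y hx hxy
    have hmap : map z he hd (QuotientAddGroup.mk ⟨x, hx⟩) = 0 :=
      (QuotientAddGroup.eq_zero_iff _).2 ⟨y, hxy.symm⟩
    exact (QuotientAddGroup.eq_zero_iff _).1 (h _ hmap)
  · intro h q hq
    obtain ⟨x, rfl⟩ := QuotientAddGroup.mk_surjective q
    obtain ⟨y, hy⟩ := (QuotientAddGroup.eq_zero_iff _).1 hq
    exact (QuotientAddGroup.eq_zero_iff _).2 (h x y x.2 hy.symm)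

theorem PeriodicHomology.map_surjective_iff (he : Semiconj z e e') (hd : Semiconj z d d') :
    Surjective (map z he hd) ↔ ∀ y, d' y = 0 → ∃ x v, d x = 0 ∧ z x - e' v = y := by
  constructor
  · intro h y hy
    obtain ⟨q, hq⟩ := h (QuotientAddGroup.mk ⟨y, hy⟩)
    obtain ⟨x, rfl⟩ := QuotientAddGroup.mk_surjective q
    obtain ⟨v, hv⟩ := QuotientAddGroup.eq.1 hq.symm
    have hv : e' v = -y + z x := hv
    exact ⟨x, v, x.2, by rw [hv]; abel⟩
  · intro h q
    obtain ⟨⟨y, hy⟩, rfl⟩ := QuotientAddGroup.mk_surjective q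
    obtain ⟨x, v, hx, hxv⟩ := h y hy
    have hv : e' v = -y + z x := by rw [← hxv]; abel
    have hclass : QuotientAddGroup.mk ⟨y, hy⟩ = map z he hd (QuotientAddGroup.mk ⟨x, hx⟩) :=
      QuotientAddGroup.eq.2 ⟨v, hv⟩
    exact ⟨_, hclass.symm⟩

theorem PeriodicHomology.map_bijective_iff_exists_addEquiv
    (he : Semiconj z e e') (hd : Semiconj z d d') :
    Bijective (map z he hd) ↔ ∃ E : PeriodicHomology e d ≃+ PeriodicHomology e' d',
      ∀ (a : M) (ha : a ∈ d.ker) (hb : z a ∈ d'.ker),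
        E (QuotientAddGroup.mk ⟨a, ha⟩) = QuotientAddGroup.mk ⟨z a, hb⟩ := by
  constructor
  · exact fun h ↦ ⟨AddEquiv.ofBijective _ h, fun _ _ _ ↦ rfl⟩
  · rintro ⟨E, hE⟩
    have hmap : ⇑(map z he hd) = E := by
      funext q
      obtain ⟨a, rfl⟩ := QuotientAddGroup.mk_surjective q
      exact (hE a a.2 _).symm
    exact hmap ▸ E.bijective

theorem PeriodicHomology.subsingleton_of_exact (h : Exact e d) :
    Subsingleton (PeriodicHomology e d) := by
  refine subsingleton_of_forall_eq 0 fun q ↦ ?_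
  obtain ⟨x, rfl⟩ := QuotientAddGroup.mk_surjective q
  exact (QuotientAddGroup.eq_zero_iff _).2 ((h x).1 x.2)

/-- A differential `(x, y) ↦ (d x, z x - e' y)` of the mapping cone of a homomorphism `z` of
2-periodic complexes from `(M; e, d)` to `(N; e', d')`. The other one is `coneDiff z e d'`. -/
def coneDiff (z : M →+ N) (d : M →+ M) (e' : N →+ N) : M × N →+ M × N :=
  (d.comp (AddMonoidHom.fst M N)).prod (z.coprod (-e'))

@[simp]
theorem coneDiff_apply (z : M →+ N) (d : M →+ M) (e' : N →+ N) (x : M × N) :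
    coneDiff z d e' x = (d x.1, z x.1 - e' x.2) := by
  simp [coneDiff, sub_eq_add_neg]

theorem exact_coneDiff_iff (he : Semiconj z e e') (hd : Semiconj z d d')
    (hde : ∀ x, d (e x) = 0) (hed' : ∀ y, e' (d' y) = 0) :
    Exact (coneDiff z e d') (coneDiff z d e') ↔
      Injective (PeriodicHomology.map z he hd) ∧ Surjective (PeriodicHomology.map z hd he) := by
  rw [PeriodicHomology.map_injective_iff, PeriodicHomology.map_surjective_iff]
  constructor
  · refine fun h ↦ ⟨fun x y hx hxy ↦ ?_, fun y hy ↦ ?_⟩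
    · obtain ⟨u, hu⟩ := (h (x, y)).1 (by simp [hx, hxy])
      exact ⟨u.1, congrArg Prod.fst hu⟩
    · obtain ⟨u, hu⟩ := (h (0, y)).1 (by simp [hy])
      rw [coneDiff_apply, Prod.mk.injEq] at hu
      exact ⟨u.1, u.2, hu⟩
  · rintro ⟨hinj, hsurj⟩ ⟨x, y⟩
    constructor
    · intro hxy
      rw [coneDiff_apply, Prod.mk_eq_zero, sub_eq_zero] at hxy
      obtain ⟨u, rfl⟩ := hinj x y hxy.1 hxy.2
      obtain ⟨w, v, hw, hwv⟩ := hsurj (y - z u) (by rw [map_sub, ← hxy.2, he, sub_self])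
      refine ⟨(u + w, v), ?_⟩
      rw [coneDiff_apply, map_add, map_add, hw, add_zero, add_sub_assoc, hwv, add_sub_cancel]
    · rintro ⟨u, hu⟩
      rw [← hu]
      simp [hde, hed', he u.1]

end PeriodicHomology

section FourTermExact

theorem exact_prodMap {M N P M' N' P' : Type*} [Zero P] [Zero P'] {f : M → N} {g : N → P}
    {f' : M' → N'} {g' : N' → P'} (h : Exact f g) (h' : Exact f' g') :
    Exact (Prod.map f f') (Prod.map g g') := fun x ↦ by
  simp [Prod.ext_iff, h x.1, h' x.2]

variable {M₀ M₁ M₂ M₃ : Type*} [AddCommGroup M₀] [AddCommGroup M₁] [AddCommGroup M₂]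
  [AddCommGroup M₃] {i : M₀ →+ M₁} {q : M₁ →+ M₂} {p : M₂ →+ M₃}

theorem exact_of_fourTermExact
    {e₀ d₀ : M₀ →+ M₀} {e₁ d₁ : M₁ →+ M₁} {e₂ d₂ : M₂ →+ M₂} {e₃ d₃ : M₃ →+ M₃}
    (hi : Injective i) (hiq : Exact i q) (hqp : Exact q p) (hp : Surjective p)
    (hie : Semiconj i e₀ e₁) (hid : Semiconj i d₀ d₁)
    (hqe : Semiconj q e₁ e₂) (hqd : Semiconj q d₁ d₂)
    (hpe : Semiconj p e₂ e₃) (hpd : Semiconj p d₂ d₃)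
    (h₀ : Exact e₀ d₀) (h₁ : Exact d₁ e₁) (hde₁ : ∀ x, d₁ (e₁ x) = 0)
    (h₂ : Exact e₂ d₂) (hed₂ : ∀ x, e₂ (d₂ x) = 0) : Exact e₃ d₃ := by
  intro x₃
  obtain ⟨x₂, rfl⟩ := hp x₃
  constructor
  · intro hx₂
    obtain ⟨x₁, hx₁⟩ := (hqp (d₂ x₂)).1 (by rw [hpd, hx₂])
    obtain ⟨x₀, hx₀⟩ := (hiq (e₁ x₁)).1 (by rw [hqe, hx₁, hed₂])
    obtain ⟨y₀, rfl⟩ := (h₀ x₀).1 (hi (by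
      rw [hid, hx₀, hde₁, map_zero]))
    obtain ⟨y₁, hy₁⟩ := (h₁ (x₁ - i y₀)).1 (by rw [map_sub, ← hie, hx₀, sub_self])
    obtain ⟨y₂, hy₂⟩ := (h₂ (x₂ - q y₁)).1 (by
      rw [map_sub, ← hqd, hy₁, map_sub, hx₁, hiq.apply_apply_eq_zero, sub_zero, sub_self])
    exact ⟨p y₂, by rw [← hpe, hy₂, map_sub, hqp.apply_apply_eq_zero, sub_zero]⟩
  · rintro ⟨y₃, hy₃⟩
    obtain ⟨y₂, rfl⟩ := hp y₃
    rw [← hy₃, ← hpe, ← hpd, h₂.apply_apply_eq_zero, map_zero]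

end FourTermExact

/-- An abelian group with two involutions and a homomorphism `hom` that carries the first
involution to the second. -/
structure InvolutionIntertwiner (M : Type*) [AddCommGroup M] where
  src : M →+ M
  tgt : M →+ M
  hom : M →+ M
  src_involutive : Involutive src
  tgt_involutive : Involutive tgt
  semiconj : Semiconj hom src tgt

namespace InvolutionIntertwiner

variable {M N : Type*} [AddCommGroup M] [AddCommGroup N]

/-- The property of inducing isomorphisms `h^±(M, src) → h^±(M, tgt)`. -/
def IsTateIso (X : InvolutionIntertwiner M) : Prop :=
  (∃ e : hPlus X.src ≃+ hPlus X.tgt,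
    ∀ (a : M) (ha : a ∈ kerP X.src) (hb : X.hom a ∈ kerP X.tgt),
      e (hPlusMk X.src a ha) = hPlusMk X.tgt (X.hom a) hb) ∧
  ∃ e : hMinus X.src ≃+ hMinus X.tgt,
    ∀ (a : M) (ha : a ∈ kerM X.src) (hb : X.hom a ∈ kerM X.tgt),
      e (hMinusMk X.src a ha) = hMinusMk X.tgt (X.hom a) hb

/-- The differential `(x, y) ↦ (x + src x, hom x - (y - tgt y))` of the mapping cone of `hom`. -/
def conePlus (X : InvolutionIntertwiner M) : M × M →+ M × M :=
  coneDiff X.hom (AddMonoidHom.id M + X.src) (AddMonoidHom.id M - X.tgt)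

/-- The differential `(x, y) ↦ (x - src x, hom x - (y + tgt y))` of the mapping cone of `hom`. -/
def coneMinus (X : InvolutionIntertwiner M) : M × M →+ M × M :=
  coneDiff X.hom (AddMonoidHom.id M - X.src) (AddMonoidHom.id M + X.tgt)

theorem semiconj_id_add (X : InvolutionIntertwiner M) :
    Semiconj X.hom ⇑(AddMonoidHom.id M + X.src) ⇑(AddMonoidHom.id M + X.tgt) := fun x ↦ by
  simp [X.semiconj x]

theorem semiconj_id_sub (X : InvolutionIntertwiner M) :
    Semiconj X.hom ⇑(AddMonoidHom.id M - X.src) ⇑(AddMonoidHom.id M - X.tgt) := fun x ↦ by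
  simp [X.semiconj x]

theorem isTateIso_iff_bijective_map (X : InvolutionIntertwiner M) :
    X.IsTateIso ↔
      Bijective (PeriodicHomology.map X.hom X.semiconj_id_add X.semiconj_id_sub) ∧
      Bijective (PeriodicHomology.map X.hom X.semiconj_id_sub X.semiconj_id_add) := by
  rw [PeriodicHomology.map_bijective_iff_exists_addEquiv,
    PeriodicHomology.map_bijective_iff_exists_addEquiv]
  rfl

theorem isTateIso_iff_exact_cone (X : InvolutionIntertwiner M) :
    X.IsTateIso ↔ Exact X.conePlus X.coneMinus ∧ Exact X.coneMinus X.conePlus := by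
  have sub_add {s : M →+ M} (hs : Involutive s) (x : M) :
      (AddMonoidHom.id M - s) ((AddMonoidHom.id M + s) x) = 0 := by simp [hs x, add_comm]
  have add_sub {s : M →+ M} (hs : Involutive s) (x : M) :
      (AddMonoidHom.id M + s) ((AddMonoidHom.id M - s) x) = 0 := by simp [hs x]
  rw [isTateIso_iff_bijective_map, conePlus, coneMinus,
    exact_coneDiff_iff X.semiconj_id_add X.semiconj_id_sub
      (sub_add X.src_involutive) (add_sub X.tgt_involutive),
    exact_coneDiff_iff X.semiconj_id_sub X.semiconj_id_add
      (add_sub X.src_involutive) (sub_add X.tgt_involutive)]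
  simp only [Bijective]
  tauto

theorem isTateIso_of_exact (X : InvolutionIntertwiner M)
    (hsrc : Exact (AddMonoidHom.id M + X.src) (AddMonoidHom.id M - X.src))
    (hsrc' : Exact (AddMonoidHom.id M - X.src) (AddMonoidHom.id M + X.src))
    (htgt : Exact (AddMonoidHom.id M + X.tgt) (AddMonoidHom.id M - X.tgt))
    (htgt' : Exact (AddMonoidHom.id M - X.tgt) (AddMonoidHom.id M + X.tgt)) :
    X.IsTateIso := by
  have := PeriodicHomology.subsingleton_of_exact hsrc
  have := PeriodicHomology.subsingleton_of_exact hsrc'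
  have := PeriodicHomology.subsingleton_of_exact htgt
  have := PeriodicHomology.subsingleton_of_exact htgt'
  exact X.isTateIso_iff_bijective_map.2
    ⟨⟨injective_of_subsingleton _, surjective_to_subsingleton _⟩,
      ⟨injective_of_subsingleton _, surjective_to_subsingleton _⟩⟩

theorem isTateIso_of_subsingleton [Subsingleton M] (X : InvolutionIntertwiner M) :
    X.IsTateIso := by
  have exact_all (f g : M →+ M) : Exact f g := fun x ↦
    iff_of_true (Subsingleton.elim _ _) ⟨x, Subsingleton.elim _ _⟩
  exact X.isTateIso_of_exact (exact_all _ _) (exact_all _ _) (exact_all _ _) (exact_all _ _)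

/-- The same homomorphism between the negated involutions. Negation interchanges `h⁺` and `h⁻`. -/
protected def neg (X : InvolutionIntertwiner M) : InvolutionIntertwiner M where
  src := -X.src
  tgt := -X.tgt
  hom := X.hom
  src_involutive x := by simp [X.src_involutive x]
  tgt_involutive x := by simp [X.tgt_involutive x]
  semiconj x := by simp [X.semiconj x]

theorem IsTateIso.neg {X : InvolutionIntertwiner M} (hX : X.IsTateIso) : X.neg.IsTateIso := by
  have conePlus_neg : X.neg.conePlus = X.coneMinus := by
    simp [conePlus, coneMinus, InvolutionIntertwiner.neg, sub_eq_add_neg]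
  have coneMinus_neg : X.neg.coneMinus = X.conePlus := by
    simp [conePlus, coneMinus, InvolutionIntertwiner.neg, sub_eq_add_neg]
  rw [isTateIso_iff_exact_cone] at hX ⊢
  rw [conePlus_neg, coneMinus_neg]
  exact hX.symm

/-- The involution `(x, y) ↦ (s y, s x)` of `M × M` attached to an involution `s` of `M`. -/
def swapInvolution (s : M →+ M) : M × M →+ M × M :=
  (s.comp (AddMonoidHom.snd M M)).prod (s.comp (AddMonoidHom.fst M M))

theorem exact_id_add_swapInvolution {s : M →+ M} (hs : Involutive s) :
    Exact (AddMonoidHom.id (M × M) + swapInvolution s)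
      (AddMonoidHom.id (M × M) - swapInvolution s) := by
  rintro ⟨x, y⟩
  constructor
  · intro h
    obtain ⟨rfl, -⟩ : x = s y ∧ y = s x := by simpa [swapInvolution, sub_eq_zero] using h
    exact ⟨(s y, 0), by simp [swapInvolution, hs y]⟩
  · rintro ⟨⟨u, v⟩, h⟩
    rw [← h]
    simp [swapInvolution, hs _, add_comm]

theorem exact_id_sub_swapInvolution {s : M →+ M} (hs : Involutive s) :
    Exact (AddMonoidHom.id (M × M) - swapInvolution s)
      (AddMonoidHom.id (M × M) + swapInvolution s) := by
  rintro ⟨x, y⟩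
  constructor
  · intro h
    obtain ⟨rfl, -⟩ : x = -s y ∧ y = -s x := by
      simpa [swapInvolution, add_eq_zero_iff_eq_neg] using h
    exact ⟨(-s y, 0), by simp [swapInvolution, hs y]⟩
  · rintro ⟨⟨u, v⟩, h⟩
    rw [← h]
    simp [swapInvolution, hs _]

/-- The homomorphism `hom × hom` between the swapping involutions of `M × M`. -/
protected def swap (X : InvolutionIntertwiner M) : InvolutionIntertwiner (M × M) where
  src := swapInvolution X.src
  tgt := swapInvolution X.tgt
  hom := X.hom.prodMap X.hom
  src_involutive x := by simp [swapInvolution, X.src_involutive _]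
  tgt_involutive x := by simp [swapInvolution, X.tgt_involutive _]
  semiconj x := by simp [swapInvolution, X.semiconj _]

theorem isTateIso_swap (X : InvolutionIntertwiner M) : X.swap.IsTateIso :=
  X.swap.isTateIso_of_exact
    (exact_id_add_swapInvolution X.src_involutive) (exact_id_sub_swapInvolution X.src_involutive)
    (exact_id_add_swapInvolution X.tgt_involutive) (exact_id_sub_swapInvolution X.tgt_involutive)

/-- Compatibility of a homomorphism `φ` with all the structure of two intertwiners. -/
structure IsMorphism (X : InvolutionIntertwiner M) (Y : InvolutionIntertwiner N) (φ : M →+ N) :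
    Prop where
  src : Semiconj φ X.src Y.src
  tgt : Semiconj φ X.tgt Y.tgt
  hom : Semiconj φ X.hom Y.hom

variable {X : InvolutionIntertwiner M} {Y : InvolutionIntertwiner N} {φ : M →+ N}

theorem IsMorphism.semiconj_conePlus (h : IsMorphism X Y φ) :
    Semiconj (φ.prodMap φ) X.conePlus Y.conePlus := fun x ↦ by
  simp [InvolutionIntertwiner.conePlus, h.src _, h.tgt _, h.hom _]

theorem IsMorphism.semiconj_coneMinus (h : IsMorphism X Y φ) :
    Semiconj (φ.prodMap φ) X.coneMinus Y.coneMinus := fun x ↦ by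
  simp [InvolutionIntertwiner.coneMinus, h.src _, h.tgt _, h.hom _]

/-- The intertwiner that `X` induces along a surjective homomorphism `p`. -/
def descend (X : InvolutionIntertwiner M) {p : M →+ N} (hp : Surjective p) {s t z : N →+ N}
    (hs : Semiconj p X.src s) (ht : Semiconj p X.tgt t) (hz : Semiconj p X.hom z) :
    InvolutionIntertwiner N where
  src := s
  tgt := t
  hom := z
  src_involutive := hp.forall.2 fun x ↦ by rw [← hs, ← hs, X.src_involutive]
  tgt_involutive := hp.forall.2 fun x ↦ by rw [← ht, ← ht, X.tgt_involutive]
  semiconj := hp.forall.2 fun x ↦ by rw [← hs, ← hz, ← hz, ← ht, X.semiconj]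

theorem isMorphism_descend (X : InvolutionIntertwiner M) {p : M →+ N} (hp : Surjective p)
    {s t z : N →+ N} (hs : Semiconj p X.src s) (ht : Semiconj p X.tgt t)
    (hz : Semiconj p X.hom z) : IsMorphism X (X.descend hp hs ht hz) p :=
  ⟨hs, ht, hz⟩

section FourTerm

variable {M₀ M₁ M₂ M₃ : Type*} [AddCommGroup M₀] [AddCommGroup M₁] [AddCommGroup M₂]
  [AddCommGroup M₃] {X₀ : InvolutionIntertwiner M₀} {X₁ : InvolutionIntertwiner M₁}
  {X₂ : InvolutionIntertwiner M₂} {X₃ : InvolutionIntertwiner M₃}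
  {i : M₀ →+ M₁} {q : M₁ →+ M₂} {p : M₂ →+ M₃}

theorem IsTateIso.of_fourTermExact
    (hX₀ : X₀.IsTateIso) (hX₁ : X₁.IsTateIso) (hX₂ : X₂.IsTateIso)
    (hi : IsMorphism X₀ X₁ i) (hq : IsMorphism X₁ X₂ q) (hp : IsMorphism X₂ X₃ p)
    (hinj : Injective i) (hiq : Exact i q) (hqp : Exact q p) (hsurj : Surjective p) :
    X₃.IsTateIso := by
  rw [isTateIso_iff_exact_cone] at hX₀ hX₁ hX₂ ⊢
  have hinj₂ : Injective (i.prodMap i) := Prod.map_injective.2 ⟨hinj, hinj⟩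
  have hiq₂ : Exact (i.prodMap i) (q.prodMap q) := exact_prodMap hiq hiq
  have hqp₂ : Exact (q.prodMap q) (p.prodMap p) := exact_prodMap hqp hqp
  have hsurj₂ : Surjective (p.prodMap p) := hsurj.prodMap hsurj
  exact ⟨exact_of_fourTermExact hinj₂ hiq₂ hqp₂ hsurj₂
      hi.semiconj_conePlus hi.semiconj_coneMinus hq.semiconj_conePlus hq.semiconj_coneMinus
      hp.semiconj_conePlus hp.semiconj_coneMinus
      hX₀.1 hX₁.2 hX₁.1.apply_apply_eq_zero hX₂.1 hX₂.2.apply_apply_eq_zero,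
    exact_of_fourTermExact hinj₂ hiq₂ hqp₂ hsurj₂
      hi.semiconj_coneMinus hi.semiconj_conePlus hq.semiconj_coneMinus hq.semiconj_conePlus
      hp.semiconj_coneMinus hp.semiconj_conePlus
      hX₀.2 hX₁.1 hX₁.2.apply_apply_eq_zero hX₂.2 hX₂.1.apply_apply_eq_zero⟩

theorem IsTateIso.of_shortExact (hX₁ : X₁.IsTateIso) (hX₂ : X₂.IsTateIso)
    (hq : IsMorphism X₁ X₂ q) (hp : IsMorphism X₂ X₃ p)
    (hinj : Injective q) (hqp : Exact q p) (hsurj : Surjective p) : X₃.IsTateIso := by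
  let X₀ : InvolutionIntertwiner PUnit.{1} :=
    ⟨0, 0, 0, fun _ ↦ rfl, fun _ ↦ rfl, fun _ ↦ rfl⟩
  have h₀ : IsMorphism X₀ X₁ 0 :=
    ⟨fun _ ↦ (map_zero _).symm, fun _ ↦ (map_zero _).symm, fun _ ↦ (map_zero _).symm⟩
  have exact_zero : Exact (0 : PUnit.{1} →+ M₁) q := fun x ↦ by
    simp [map_eq_zero_iff q hinj, eq_comm]
  exact X₀.isTateIso_of_subsingleton.of_fourTermExact hX₁ hX₂ h₀ hq hp
    (injective_of_subsingleton _) exact_zero hqp hsurj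

end FourTerm

end InvolutionIntertwiner

section Koszul

variable {A : Type*} [CommRing A]

/-- The first differential `x ↦ (b x, -a x)` of the Koszul complex of `a, b`. -/
def koszulRelation (a b : A) : A →+ A × A :=
  (AddMonoidHom.mulLeft b).prod (-AddMonoidHom.mulLeft a)

/-- The second differential `(x, y) ↦ a x + b y` of the Koszul complex of `a, b`. -/
def koszulCombination (a b : A) : A × A →+ A :=
  (AddMonoidHom.mulLeft a).coprod (AddMonoidHom.mulLeft b)

variable {a b : A}

theorem koszulRelation_injective (ha : IsLeftRegular a) : Injective (koszulRelation a b) :=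
  fun _ _ h ↦ ha (neg_injective (congrArg Prod.snd h))

theorem exact_koszulRelation_koszulCombination (ha : IsLeftRegular a)
    (hb : ∀ y, b * y ∈ Ideal.span {a} → y ∈ Ideal.span {a}) :
    Exact (koszulRelation a b) (koszulCombination a b) := by
  rintro ⟨x, y⟩
  constructor
  · intro h
    have hxy : a * x + b * y = 0 := h
    obtain ⟨t, rfl⟩ : a ∣ y := Ideal.mem_span_singleton.1
      (hb y (Ideal.mem_span_singleton.2 ⟨-x, by linear_combination hxy⟩))
    have hx : x = b * -t := ha (by linear_combination hxy)
    exact ⟨-t, by simp [koszulRelation, hx]⟩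
  · rintro ⟨t, h⟩
    rw [← h]
    simp [koszulRelation, koszulCombination, mul_left_comm]

theorem exact_koszulCombination_mk :
    Exact (koszulCombination a b) (Ideal.Quotient.mk (Ideal.span {a, b})) := fun x ↦ by
  simp [Ideal.Quotient.eq_zero_iff_mem, Ideal.mem_span_pair, koszulCombination, mul_comm]

theorem exact_mulLeft_mk :
    Exact (AddMonoidHom.mulLeft a) (Ideal.Quotient.mk (Ideal.span {a})) := fun x ↦ by
  rw [Ideal.Quotient.eq_zero_iff_mem, Ideal.mem_span_singleton]
  exact exists_congr fun _ ↦ eq_comm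

end Koszul

section TwistedMul

variable {A : Type*} [CommRing A] {σ : A →+* A} {l ζ : A}

/-- Multiplication by a `⋆_l`-self-dual element `ζ`, as a homomorphism from `⋆` to `⋆_l`. -/
def twistedMul (hσ : Involutive σ) (hl : σ l * l = 1) (hζ : σ ζ * l = ζ) :
    InvolutionIntertwiner A where
  src := σ.toAddMonoidHom
  tgt := twistL σ l
  hom := AddMonoidHom.mulLeft ζ
  src_involutive := hσ
  tgt_involutive a := by simp [twistL, hσ a, mul_assoc, hl]
  semiconj a := by
    simp only [twistL, AddMonoidHom.comp_apply, AddMonoidHom.coe_mulLeft,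
      AddMonoidHom.mulRight_apply, RingHom.toAddMonoidHom_eq_coe, AddMonoidHom.coe_coe, map_mul]
    linear_combination -(σ a) * hζ

variable {hσ : Involutive σ} {hl : σ l * l = 1} {hζ : σ ζ * l = ζ}

open InvolutionIntertwiner

theorem isMorphism_mulLeft {μ : A} (hμ : σ μ = μ) :
    IsMorphism (twistedMul hσ hl hζ) (twistedMul hσ hl hζ) (AddMonoidHom.mulLeft μ) where
  src x := by simp [twistedMul, hμ]
  tgt x := by simp [twistedMul, twistL, hμ, mul_assoc]
  hom x := by simp [twistedMul, mul_left_comm]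

theorem isMorphism_koszulRelation (a : A) :
    IsMorphism (twistedMul hσ hl hζ).neg (twistedMul hσ hl hζ).swap
      (koszulRelation a (σ a)) where
  src x := by
    simp [twistedMul, InvolutionIntertwiner.neg, InvolutionIntertwiner.swap, swapInvolution,
      koszulRelation, hσ a]
  tgt x := by
    simp [twistedMul, InvolutionIntertwiner.neg, InvolutionIntertwiner.swap, swapInvolution,
      koszulRelation, twistL, hσ a, mul_assoc]
  hom x := by
    simp [twistedMul, InvolutionIntertwiner.neg, InvolutionIntertwiner.swap, koszulRelation,
      mul_left_comm]

theorem isMorphism_koszulCombination (a : A) :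
    IsMorphism (twistedMul hσ hl hζ).swap (twistedMul hσ hl hζ)
      (koszulCombination a (σ a)) where
  src x := by
    simp [twistedMul, InvolutionIntertwiner.swap, swapInvolution, koszulCombination, hσ a, add_comm]
  tgt x := by
    simp [twistedMul, InvolutionIntertwiner.swap, swapInvolution, koszulCombination, twistL, hσ a,
      add_mul, mul_assoc, add_comm]
  hom x := by
    simp [twistedMul, InvolutionIntertwiner.swap, koszulCombination, mul_add, mul_left_comm]

/-- Multiplication by the class of `ζ` on `A ⧸ I`, as a homomorphism between the involutions `s`
and `t` to which `⋆` and `⋆_l` descend. -/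
def twistedMulQuotient (hσ : Involutive σ) (hl : σ l * l = 1) (hζ : σ ζ * l = ζ) {I : Ideal A}
    {s t : A ⧸ I →+ A ⧸ I} (hs : ∀ a, s (Ideal.Quotient.mk I a) = Ideal.Quotient.mk I (σ a))
    (ht : ∀ a, t (Ideal.Quotient.mk I a) = Ideal.Quotient.mk I (σ a * l)) :
    InvolutionIntertwiner (A ⧸ I) :=
  (twistedMul hσ hl hζ).descend (p := (Ideal.Quotient.mk I).toAddMonoidHom)
    Ideal.Quotient.mk_surjective (s := s) (t := t)
    (z := AddMonoidHom.mulLeft (Ideal.Quotient.mk I ζ))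
    (fun a ↦ (hs a).symm) (fun a ↦ (ht a).symm) (map_mul (Ideal.Quotient.mk I) ζ)

theorem isTateIso_twistedMulQuotient_span_singleton (h : (twistedMul hσ hl hζ).IsTateIso) {μ : A}
    (hμ : σ μ = μ) (hreg : IsLeftRegular μ) {s t : A ⧸ Ideal.span {μ} →+ A ⧸ Ideal.span {μ}}
    (hs : ∀ a, s (Ideal.Quotient.mk _ a) = Ideal.Quotient.mk _ (σ a))
    (ht : ∀ a, t (Ideal.Quotient.mk _ a) = Ideal.Quotient.mk _ (σ a * l)) :
    (twistedMulQuotient hσ hl hζ hs ht).IsTateIso :=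
  h.of_shortExact h (isMorphism_mulLeft hμ) (isMorphism_descend _ _ _ _ _)
    hreg exact_mulLeft_mk Ideal.Quotient.mk_surjective

theorem isTateIso_twistedMulQuotient_span_pair (h : (twistedMul hσ hl hζ).IsTateIso) {a : A}
    (ha : IsLeftRegular a) (hreg : ∀ y, σ a * y ∈ Ideal.span {a} → y ∈ Ideal.span {a})
    {s t : A ⧸ Ideal.span {a, σ a} →+ A ⧸ Ideal.span {a, σ a}}
    (hs : ∀ x, s (Ideal.Quotient.mk _ x) = Ideal.Quotient.mk _ (σ x))
    (ht : ∀ x, t (Ideal.Quotient.mk _ x) = Ideal.Quotient.mk _ (σ x * l)) :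
    (twistedMulQuotient hσ hl hζ hs ht).IsTateIso :=
  h.neg.of_fourTermExact (isTateIso_swap _) h
    (isMorphism_koszulRelation a) (isMorphism_koszulCombination a) (isMorphism_descend _ _ _ _ _)
    (koszulRelation_injective ha) (exact_koszulRelation_koszulCombination ha hreg)
    exact_koszulCombination_mk Ideal.Quotient.mk_surjective

end TwistedMul

theorem span_le_comap_of_mapsTo {A : Type*} [Semiring A] {σ : A →+* A} {S : Set A}
    (h : Set.MapsTo σ S S) : Ideal.span S ≤ (Ideal.span S).comap σ :=
  Ideal.span_le.2 fun _ hx ↦ Ideal.subset_span (h hx)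

/-- Let `(A,⋆)` be a `⋆`-ring, `l ∈ A^×` a unit with `l⋆ = l⁻¹`, and
`ζ ∈ A` a `⋆_l`-self-dual element such that multiplication by `ζ` induces isomorphisms
`h^±(A,⋆) → h^±(A,⋆_l)`.  Then (a) for every `⋆`-self-dual non-zero-divisor `μ`, the ideal
`Aμ` is stable under `⋆` and `⋆_l`, both involutions descend to `A/Aμ`, and multiplication
by the class of `ζ` induces isomorphisms `h^±(A/Aμ,⋆) → h^±(A/Aμ,⋆_l)`; (b) likewise for
`𝔞 = Aλ + Aλ⋆` whenever `λ, λ⋆` is a regular sequence on `A`. -/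
theorem statement14
    {A : Type*} [CommRing A] (σ : A →+* A) (hσ : ∀ a, σ (σ a) = a)
    (l : Aˣ) (hl : σ l = ((l⁻¹ : Aˣ) : A))
    (ζ : A) (hζ : σ ζ * l = ζ)
    (hisoP : ∃ e : hPlus σ.toAddMonoidHom ≃+ hPlus (twistL σ (l : A)),
      ∀ (a : A) (ha : a ∈ kerP σ.toAddMonoidHom) (hb : ζ * a ∈ kerP (twistL σ (l : A))),
        e (hPlusMk σ.toAddMonoidHom a ha) = hPlusMk (twistL σ (l : A)) (ζ * a) hb)
    (hisoM : ∃ e : hMinus σ.toAddMonoidHom ≃+ hMinus (twistL σ (l : A)),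
      ∀ (a : A) (ha : a ∈ kerM σ.toAddMonoidHom) (hb : ζ * a ∈ kerM (twistL σ (l : A))),
        e (hMinusMk σ.toAddMonoidHom a ha) = hMinusMk (twistL σ (l : A)) (ζ * a) hb) :
    -- (a) quotients by a self-dual non-zero-divisor
    (∀ μ : A, σ μ = μ → (∀ a : A, μ * a = 0 → a = 0) →
      (∀ a ∈ (Ideal.span {μ} : Ideal A), σ a ∈ (Ideal.span {μ} : Ideal A)) ∧
      (∀ a ∈ (Ideal.span {μ} : Ideal A), σ a * l ∈ (Ideal.span {μ} : Ideal A)) ∧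
      ∀ (σq τq : (A ⧸ (Ideal.span {μ} : Ideal A)) →+ (A ⧸ (Ideal.span {μ} : Ideal A))),
        (∀ a : A, σq (Ideal.Quotient.mk _ a) = Ideal.Quotient.mk _ (σ a)) →
        (∀ a : A, τq (Ideal.Quotient.mk _ a) = Ideal.Quotient.mk _ (σ a * l)) →
        (∃ e : hPlus σq ≃+ hPlus τq,
          ∀ (a : A ⧸ (Ideal.span {μ} : Ideal A)) (ha : a ∈ kerP σq)
            (hb : (Ideal.Quotient.mk _ ζ) * a ∈ kerP τq),
            e (hPlusMk σq a ha) = hPlusMk τq ((Ideal.Quotient.mk _ ζ) * a) hb) ∧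
        (∃ e : hMinus σq ≃+ hMinus τq,
          ∀ (a : A ⧸ (Ideal.span {μ} : Ideal A)) (ha : a ∈ kerM σq)
            (hb : (Ideal.Quotient.mk _ ζ) * a ∈ kerM τq),
            e (hMinusMk σq a ha) = hMinusMk τq ((Ideal.Quotient.mk _ ζ) * a) hb)) ∧
    -- (b) quotients by the ideal generated by a regular sequence `λ, λ⋆`
    (∀ lam : A, (∀ a : A, lam * a = 0 → a = 0) →
      (∀ a : A, σ lam * a ∈ (Ideal.span {lam} : Ideal A) →
        a ∈ (Ideal.span {lam} : Ideal A)) →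
      (∀ a ∈ (Ideal.span {lam, σ lam} : Ideal A),
          σ a ∈ (Ideal.span {lam, σ lam} : Ideal A)) ∧
      (∀ a ∈ (Ideal.span {lam, σ lam} : Ideal A),
          σ a * l ∈ (Ideal.span {lam, σ lam} : Ideal A)) ∧
      ∀ (σq τq : (A ⧸ (Ideal.span {lam, σ lam} : Ideal A)) →+
          (A ⧸ (Ideal.span {lam, σ lam} : Ideal A))),
        (∀ a : A, σq (Ideal.Quotient.mk _ a) = Ideal.Quotient.mk _ (σ a)) →
        (∀ a : A, τq (Ideal.Quotient.mk _ a) = Ideal.Quotient.mk _ (σ a * l)) →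
        (∃ e : hPlus σq ≃+ hPlus τq,
          ∀ (a : A ⧸ (Ideal.span {lam, σ lam} : Ideal A)) (ha : a ∈ kerP σq)
            (hb : (Ideal.Quotient.mk _ ζ) * a ∈ kerP τq),
            e (hPlusMk σq a ha) = hPlusMk τq ((Ideal.Quotient.mk _ ζ) * a) hb) ∧
        (∃ e : hMinus σq ≃+ hMinus τq,
          ∀ (a : A ⧸ (Ideal.span {lam, σ lam} : Ideal A)) (ha : a ∈ kerM σq)
            (hb : (Ideal.Quotient.mk _ ζ) * a ∈ kerM τq),
            e (hMinusMk σq a ha) = hMinusMk τq ((Ideal.Quotient.mk _ ζ) * a) hb)) := by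
  have hl : σ l * l = 1 := by rw [hl, Units.inv_mul]
  have hTate : (twistedMul hσ hl hζ).IsTateIso := ⟨hisoP, hisoM⟩
  refine ⟨fun μ hμ hreg ↦ ?_, fun lam hreg hreg' ↦ ?_⟩
  · have stable : Ideal.span {μ} ≤ (Ideal.span {μ}).comap σ :=
      span_le_comap_of_mapsTo (by simp [Set.MapsTo, hμ])
    have regular : IsLeftRegular μ := isLeftRegular_iff_right_eq_zero_of_mul.2 hreg
    exact ⟨stable, fun a ha ↦ Ideal.mul_mem_right _ _ (stable ha), fun σq τq hσq hτq ↦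
      isTateIso_twistedMulQuotient_span_singleton hTate hμ regular hσq hτq⟩
  · have stable : Ideal.span {lam, σ lam} ≤ (Ideal.span {lam, σ lam}).comap σ :=
      span_le_comap_of_mapsTo (by simp [Set.MapsTo, hσ lam])
    have regular : IsLeftRegular lam := isLeftRegular_iff_right_eq_zero_of_mul.2 hreg
    exact ⟨stable, fun a ha ↦ Ideal.mul_mem_right _ _ (stable ha), fun σq τq hσq hτq ↦
      isTateIso_twistedMulQuotient_span_pair hTate regular hreg' hσq hτq⟩
end
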